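/- arXiv:1304.6529 — 6 statements merged into one kernel-verified Lean document; each statement's English description precedes it below -/
import Mathlib

section
/- Let F ⊇ ℚ be a field extension of degree n with σ₁, …, σₙ the n distinct field monomorphisms F → ℂ. Let C₀ be a k×k matrix with entries in F and let C be the block-diagonal kn×kn matrix with diagonal blocks σ₁(C₀), σ₂(C₀), …, σₙ(C₀). Let E be a field extension of F which is Galois over ℚ, and let P be an invertible kn×kn matrix with entries in E satisfying σ(P) = P·(K_{σ⁻¹} ⊗ I_k) for all σ ∈ Gal(E/ℚ), where σ(P) denotes entrywise application of σ. Then the matrix P C P⁻¹ has all its entries in ℚ. -/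
open Matrix Module

/-!
The relation `τ(P) = P (K_{τ⁻¹} ⊗ I)` says that `τ` permutes the block columns of `P`, and
`τ ∘ σᵢ = σ_{π(i)}` says that it permutes the diagonal blocks of `C` in the same way. Writing `e`
for the common permutation of the indices, `τ(P) = P.submatrix id e` and `τ(C) = C.submatrix e e`,
so `e` only renames the summation indices in `τ(P) τ(C) τ(P)⁻¹`. Hence `P C P⁻¹` is fixed by the
whole Galois group.
-/

open scoped Kronecker

section Matrices

variable {R S m κ ι : Type*}

section Conjugation

variable [CommRing R] [Fintype m] [DecidableEq m]

theorem map_mul_mul_inv [CommRing S] (f : R →+* S) {P : Matrix m m R}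
    (hP : IsUnit P) (C : Matrix m m R) :
    (P * C * P⁻¹).map f = P.map f * C.map f * (P.map f)⁻¹ := by
  have map_inv : (P.map f)⁻¹ = P⁻¹.map f := by
    apply inv_eq_right_inv
    rw [← Matrix.map_mul, mul_nonsing_inv P ((isUnit_iff_isUnit_det P).1 hP),
      Matrix.map_one f f.map_zero f.map_one]
  rw [map_inv, Matrix.map_mul, Matrix.map_mul]

theorem submatrix_mul_submatrix_mul_inv_submatrix (P C : Matrix m m R) (e : Equiv.Perm m) :
    P.submatrix id e * C.submatrix e e * (P.submatrix id e)⁻¹ = P * C * P⁻¹ := by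
  have inv_submatrix : (P.submatrix id e)⁻¹ = P⁻¹.submatrix e id :=
    inv_submatrix_equiv P (Equiv.refl m) e
  rw [inv_submatrix, submatrix_mul_equiv, submatrix_mul_equiv, submatrix_id_id]

end Conjugation

variable [DecidableEq ι]

theorem blockDiagonal_submatrix_prodCongr_refl [Zero R] (B : ι → Matrix κ κ R)
    (π : Equiv.Perm ι) :
    (blockDiagonal B).submatrix ((Equiv.refl κ).prodCongr π) ((Equiv.refl κ).prodCongr π) =
      blockDiagonal fun i => B (π i) := by
  ext
  simp [blockDiagonal_apply]

theorem one_kronecker_permMatrix [MulZeroOneClass R] [DecidableEq κ] (π : Equiv.Perm ι) :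
    (1 : Matrix κ κ R) ⊗ₖ π.permMatrix R =
      of fun x y : κ × ι => if x.1 = y.1 ∧ y.2 = π x.2 then 1 else 0 := by
  ext
  simp [kroneckerMap_apply, one_apply, ← ite_and, and_comm, eq_comm]

theorem mul_one_kronecker_permMatrix_inv [NonAssocSemiring R] [Fintype κ] [DecidableEq κ]
    [Fintype ι] (P : Matrix m (κ × ι) R) (π : Equiv.Perm ι) :
    P * ((1 : Matrix κ κ R) ⊗ₖ (π⁻¹).permMatrix R) =
      P.submatrix id ((Equiv.refl κ).prodCongr π) := by
  ext a ⟨b, j⟩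
  simp [mul_apply, one_kronecker_permMatrix, Fintype.sum_prod_type, ite_and, Equiv.eq_symm_apply]

end Matrices

section AlgebraHoms

variable {R A B ι : Type*} [CommSemiring R] [Semiring A] [Semiring B] [Algebra R A] [Algebra R B]

theorem exists_perm_comp_eq {σ : ι → A →ₐ[R] B} (hσ : σ.Bijective) (τ : B ≃ₐ[R] B) :
    ∃ π : Equiv.Perm ι, ∀ i, (τ : B →ₐ[R] B).comp (σ i) = σ (π i) := by
  let σEquiv := Equiv.ofBijective σ hσ
  refine ⟨σEquiv.symm.permCongr (AlgEquiv.refl.arrowCongr τ), fun i => ?_⟩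
  exact (σEquiv.apply_symm_apply _).symm

theorem bijective_codRestrict {σ : ι → A →ₐ[R] B} (hσ : σ.Bijective) (S : Subalgebra R B)
    (hS : ∀ i x, σ i x ∈ S) :
    Function.Bijective fun i => (σ i).codRestrict S (hS i) := by
  refine ⟨fun i j hij => hσ.1 ?_, fun φ => ?_⟩
  · simpa only [AlgHom.val_comp_codRestrict] using congr_arg S.val.comp hij
  · obtain ⟨i, hi⟩ := hσ.2 (S.val.comp φ)
    exact ⟨i, AlgHom.ext fun x => Subtype.ext (DFunLike.congr_fun hi x)⟩

end AlgebraHoms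

section Galois

variable {K E A ι κ m n : Type*} [Field K] [Field E] [Algebra K E]

theorem exists_eq_map_algebraMap_of_forall_map_eq [IsGalois K E] {M : Matrix m n E}
    (hM : ∀ τ : E ≃ₐ[K] E, M.map τ = M) : ∃ N : Matrix m n K, M = N.map (algebraMap K E) := by
  have mem_range p q : M p q ∈ Set.range (algebraMap K E) :=
    (InfiniteGalois.mem_range_algebraMap_iff_fixed _).2 fun τ => congr_fun₂ (hM τ) p q
  choose N hN using mem_range
  exact ⟨of N, ext fun p q => (hN p q).symm⟩

theorem exists_mul_blockDiagonal_mul_inv_eq_map_algebraMap [Semiring A] [Algebra K A]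
    [IsGalois K E] [Fintype κ] [DecidableEq κ] [Fintype ι] [DecidableEq ι]
    {σ : ι → A →ₐ[K] E} (hσ : σ.Bijective) (C₀ : Matrix κ κ A)
    {P : Matrix (κ × ι) (κ × ι) E} (hP : IsUnit P)
    (hPgal : ∀ (τ : E ≃ₐ[K] E) (π : Equiv.Perm ι),
      (∀ i, (τ : E →ₐ[K] E).comp (σ i) = σ (π i)) →
        P.map τ = P * ((1 : Matrix κ κ E) ⊗ₖ (π⁻¹).permMatrix E)) :
    ∃ M : Matrix (κ × ι) (κ × ι) K,
      P * blockDiagonal (fun i => C₀.map (σ i)) * P⁻¹ = M.map (algebraMap K E) := by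
  set C := blockDiagonal fun i => C₀.map (σ i) with hC
  refine exists_eq_map_algebraMap_of_forall_map_eq fun τ => ?_
  obtain ⟨π, hπ⟩ := exists_perm_comp_eq hσ τ
  let e := (Equiv.refl κ).prodCongr π
  have map_P : P.map τ = P.submatrix id e :=
    (hPgal τ π hπ).trans (mul_one_kronecker_permMatrix_inv P π)
  have map_C : C.map τ = C.submatrix e e := by
    rw [hC, blockDiagonal_submatrix_prodCongr_refl, blockDiagonal_map _ _ (map_zero τ)]
    simp only [← hπ, Matrix.map_map, AlgHom.coe_comp, AlgEquiv.coe_toAlgHom]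
  calc (P * C * P⁻¹).map τ
      = P.map τ * C.map τ * (P.map τ)⁻¹ := map_mul_mul_inv (τ : E →+* E) hP C
    _ = P.submatrix id e * C.submatrix e e * (P.submatrix id e)⁻¹ := by rw [map_P, map_C]
    _ = P * C * P⁻¹ := submatrix_mul_submatrix_mul_inv_submatrix P C e

end Galois

section Embedding

variable {K Ω : Type*} [Field K] [Field Ω] [Algebra K Ω] (E : IntermediateField K Ω)

theorem algHom_apply_mem_of_normal {F : Type*} [Field F] [Algebra K F] [Normal K E]
    (j : F →ₐ[K] E) (φ : F →ₐ[K] Ω) (x : F) : φ x ∈ E := by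
  have minpoly_eq : minpoly K (j x) = minpoly K (φ x) := by
    rw [minpoly.algHom_eq j j.injective, minpoly.algHom_eq φ φ.injective]
  have φx_root : Polynomial.aeval (φ x) (minpoly K (j x)) = 0 := minpoly_eq ▸ minpoly.aeval K (φ x)
  obtain ⟨y, hy⟩ := (Normal.splits ‹Normal K E› (j x)).mem_range_of_isRoot
    (i := algebraMap E Ω)
    (Polynomial.map_ne_zero (minpoly.ne_zero (Normal.isIntegral ‹Normal K E› (j x))))
    (by rwa [Polynomial.map_map, ← IsScalarTower.algebraMap_eq, Polynomial.IsRoot,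
      Polynomial.eval_map_algebraMap])
  exact hy ▸ y.2

theorem conjugated_blockdiagonal_is_rational_general {A κ ι : Type*} [Semiring A] [Algebra K A]
    [Fintype κ] [DecidableEq κ] [Fintype ι] [DecidableEq ι] [IsGalois K E]
    {σ : ι → A →ₐ[K] Ω} (hσ : σ.Bijective) (hσE : ∀ i x, σ i x ∈ E) (C₀ : Matrix κ κ A)
    {P : Matrix (κ × ι) (κ × ι) E} (hP : IsUnit P)
    (hPgal : ∀ (τ : E ≃ₐ[K] E) (π : Equiv.Perm ι),
      (∀ i x, (τ ⟨σ i x, hσE i x⟩ : Ω) = σ (π i) x) →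
        P.map τ = P * ((1 : Matrix κ κ E) ⊗ₖ (π⁻¹).permMatrix E)) (p q : κ × ι) :
    ∃ r : K, (P.map (algebraMap E Ω) * blockDiagonal (fun i => C₀.map (σ i)) *
      (P.map (algebraMap E Ω))⁻¹) p q = algebraMap K Ω r := by
  let s (i : ι) : A →ₐ[K] E := (σ i).codRestrict E.toSubalgebra (hσE i)
  obtain ⟨M, hM⟩ := exists_mul_blockDiagonal_mul_inv_eq_map_algebraMap (σ := s)
    (bijective_codRestrict hσ E.toSubalgebra hσE) C₀ hP fun τ π hπ =>
      hPgal τ π fun i x => congr_arg Subtype.val (DFunLike.congr_fun (hπ i) x)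
  have map_blocks : (blockDiagonal fun i => C₀.map (s i)).map (algebraMap E Ω) =
      blockDiagonal fun i => C₀.map (σ i) := blockDiagonal_map _ _ (map_zero _)
  refine ⟨M p q, ?_⟩
  rw [← map_blocks, ← map_mul_mul_inv (algebraMap E Ω) hP, hM]
  exact (IsScalarTower.algebraMap_apply K E Ω (M p q)).symm

end Embedding

/-- If `C` is block-diagonal with blocks `σᵢ(C₀)` and `P` satisfies the Galois-permutation
compatibility `σ(P) = P ⬝ (K_{σ⁻¹} ⊗ I_k)` for all `σ ∈ Gal(E/ℚ)`, then `P C P⁻¹` has all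
entries in `ℚ`. -/
theorem conjugated_blockdiagonal_is_rational
    (k n : ℕ)
    (F : IntermediateField ℚ ℂ) [FiniteDimensional ℚ F]
    (hFdeg : finrank ℚ F = n)
    -- the `n` distinct monomorphisms `F → ℂ`
    (σ : Fin n → (F →+* ℂ))
    (hσinj : Function.Injective σ)
    (hσall : ∀ τ : F →+* ℂ, ∃ i, τ = σ i)
    (C₀ : Matrix (Fin k) (Fin k) F)
    (E : IntermediateField ℚ ℂ) (hFE : F ≤ E) [IsGalois ℚ E]
    (P : Matrix (Fin k × Fin n) (Fin k × Fin n) E)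
    (hP : IsUnit P)
    (hPgal : ∀ (τ : E ≃ₐ[ℚ] E) (π : Equiv.Perm (Fin n)),
      -- `π` is the permutation determined by `τ ∘ σᵢ = σ_{π(i)}`
      (∀ (i : Fin n) (x : F) (hx : σ i x ∈ E), ((τ ⟨σ i x, hx⟩ : E) : ℂ) = σ (π i) x) →
      -- `τ(P) = P ⬝ (K_{π⁻¹} ⊗ I_k)`
      P.map (fun e : E => (τ e : E)) =
        P * Matrix.of (fun x y : Fin k × Fin n =>
          if x.1 = y.1 ∧ y.2 = π⁻¹ x.2 then (1 : E) else 0)) :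
    ∀ p q : Fin k × Fin n,
      ∃ r : ℚ,
        ((P.map (fun e : E => (e : ℂ))) *
          blockDiagonal (fun i : Fin n => C₀.map (fun x : F => σ i x)) *
          (P.map (fun e : E => (e : ℂ)))⁻¹) p q = (r : ℂ) := by
  -- The `ℚ`-algebra `E` of the statement comes from `DivisionRing.toRatAlgebra`, which instance
  -- search does not identify with the structure of `E` as an intermediate field.
  have : @IsGalois ℚ _ E _ E.algebra' := ‹IsGalois ℚ E›
  have hσ := (RingHom.equivRatAlgHom F ℂ).bijective.comp
    ⟨hσinj, fun τ => (hσall τ).imp fun _ => Eq.symm⟩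
  exact conjugated_blockdiagonal_is_rational_general E hσ
    (fun _ => algHom_apply_mem_of_normal E (IntermediateField.inclusion hFE) _) C₀ hP
    fun τ π hπ => by rw [one_kronecker_permMatrix]; exact hPgal τ π fun i x _ => hπ i x
end

section
/- Let G be a finite group and χ an irreducible real-valued character of G with Schur index m_ℚ(χ) = 2. Let K = ℚ(χ) ⊆ ℝ and let ρ : G → GL_{2n}(K) be a representation with character 2χ, acting on V = K^{2n}. Then the following are equivalent: (1) there exists a minimal splitting field F for χ with F ⊆ ℝ; (2) there exists a G-equivariant K-linear isomorphism f : K^{2n} → K^{2n} with f² = κ·Id for some κ ∈ K with κ > 0 and √κ ∉ K. -/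
open Matrix Module

/-- `χ` is afforded by an `F`-representation: there is a matrix representation of `G`
over `F` whose character is `χ`. -/
def Affords {G : Type*} [Group G] (F : IntermediateField ℚ ℂ) (χ : G → ℂ) : Prop :=
  ∃ (d : ℕ) (ρ : G →* Matrix (Fin d) (Fin d) F),
    ∀ g : G, (((ρ g).trace : F) : ℂ) = χ g

/-!
A representation `ρ` over a subfield of `ℂ` with character `2χ` is irreducible unless the subfield
affords `χ`: over `ℂ`, two complementary proper subrepresentations have characters adding up to
`2χ`, both map onto the irreducible representation with character `χ`, and comparing dimensions
each of them has character `χ`.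

Let `E = K(s)` with `s² = κ` in `K` not a square. If `E` affords `χ`, restricting scalars from `E`
to `K` produces a representation with character `2χ`; it is isomorphic to `ρ`, since `ρ` is
irreducible, and multiplication by `s` becomes the required `f`. Conversely, given `f`, the
equivariant maps `f - s` and `f + s` over `E` have product zero, and neither vanishes because the
trace of `f` lies in `K`. Hence `ρ` is reducible over `E`, and `E` affords `χ`. Finally, the real
quadratic extensions of a real field `K` are the `K(√κ)` with `κ > 0` not a square.
-/

open Representation
open scoped TensorProduct

section Intertwining

variable {k G V W : Type*} [Field k] [Group G] [AddCommGroup V] [Module k V] [AddCommGroup W]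
  [Module k W] {ρ : Representation k G V} {σ : Representation k G W}

theorem intertwiningMap_ne_zero_of_injective [Nontrivial V] {a : IntertwiningMap ρ σ}
    (ha : Function.Injective a) : a ≠ 0 := by
  rintro rfl
  obtain ⟨v, hv⟩ := exists_ne (0 : V)
  exact hv (ha rfl)

theorem nontrivial_of_isIrreducible [ρ.IsIrreducible] : Nontrivial V := by
  by_contra! h
  have := Subrepresentation.toSubmodule_injective (ρ := ρ) |>.subsingleton
  exact false_of_nontrivial_of_subsingleton (Subrepresentation ρ)

theorem eq_zero_or_eq_zero_of_commute_of_mul_eq_zero [ρ.IsIrreducible] {a b : End k V}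
    (ha : ∀ g, Commute a (ρ g)) (hab : a * b = 0) : a = 0 ∨ b = 0 := by
  rcases IsIrreducible.injective_or_eq_zero (⟨a, ha⟩ : IntertwiningMap ρ ρ) with hinj | h0
  · exact .inr (LinearMap.ext fun v =>
      hinj ((LinearMap.congr_fun hab v).trans (map_zero a).symm))
  · exact .inl (congrArg IntertwiningMap.toLinearMap h0)

theorem isCompl_toSubmodule {P Q : Subrepresentation ρ} (h : IsCompl P Q) :
    IsCompl P.toSubmodule Q.toSubmodule where
  disjoint := disjoint_iff.mpr (congrArg Subrepresentation.toSubmodule h.inf_eq_bot)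
  codisjoint := codisjoint_iff.mpr (congrArg Subrepresentation.toSubmodule h.sup_eq_top)

theorem nontrivial_subrepresentation [Nontrivial V] : Nontrivial (Subrepresentation ρ) :=
  ⟨⊥, ⊤, fun h => bot_ne_top (congrArg Subrepresentation.toSubmodule h)⟩

theorem exists_isCompl_nontrivial_of_not_isIrreducible [CharZero k] [Finite G] [Nontrivial V]
    (h : ¬ ρ.IsIrreducible) :
    ∃ P Q : Subrepresentation ρ, IsCompl P Q ∧ Nontrivial P.toSubmodule ∧
      Nontrivial Q.toSubmodule := by
  have : NeZero (Nat.card G : k) := ⟨Nat.cast_ne_zero.mpr Nat.card_pos.ne'⟩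
  have := nontrivial_subrepresentation (ρ := ρ)
  obtain ⟨P, hbot, htop⟩ : ∃ P : Subrepresentation ρ, P ≠ ⊥ ∧ P ≠ ⊤ := by
    by_contra! hP
    exact h ⟨fun P => or_iff_not_imp_left.mpr (hP P)⟩
  obtain ⟨Q, hPQ⟩ := exists_isCompl P
  have hnontrivial {R : Subrepresentation ρ} (hR : R ≠ ⊥) : Nontrivial R.toSubmodule :=
    Submodule.nontrivial_iff_ne_bot.mpr fun h0 => hR (Subrepresentation.toSubmodule_injective h0)
  have hQ : Q ≠ ⊥ := fun h0 => htop (by simpa only [h0, sup_bot_eq] using hPQ.sup_eq_top)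
  exact ⟨P, Q, hPQ, hnontrivial hbot, hnontrivial hQ⟩

end Intertwining

section Characters

variable {k G V W U : Type*} [Field k] [Group G]
  [AddCommGroup V] [Module k V] [FiniteDimensional k V]
  [AddCommGroup W] [Module k W] [FiniteDimensional k W]
  [AddCommGroup U] [Module k U] [FiniteDimensional k U]
  {ρ : Representation k G V} {σ : Representation k G W} {τ : Representation k G U}

theorem character_prod (ρ : Representation k G V) (σ : Representation k G W) :
    (ρ.prod σ).character = ρ.character + σ.character :=
  funext fun g => LinearMap.trace_prodMap' (ρ g) (σ g)

theorem character_eq_add_of_isCompl {P Q : Subrepresentation ρ} (h : IsCompl P Q) :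
    ρ.character = P.toRepresentation.character + Q.toRepresentation.character := by
  let e : (P.toRepresentation.prod Q.toRepresentation).Equiv ρ :=
    Representation.Equiv.mk (Submodule.prodEquivOfIsCompl _ _ (isCompl_toSubmodule h)) fun g =>
      LinearMap.ext fun v => by simp [Subrepresentation.toRepresentation, Representation.prod]
  rw [← char_iso e, character_prod]

variable [CharZero k]

theorem finrank_eq_of_character_eq (h : ρ.character = σ.character) :
    finrank k V = finrank k W := by
  apply Nat.cast_injective (R := k)
  rw [← char_one ρ, ← char_one σ, h]

variable [Finite G]

theorem finrank_intertwiningMap_congr_character (h : σ.character = τ.character) :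
    finrank k (IntertwiningMap ρ σ) = finrank k (IntertwiningMap ρ τ) := by
  have := Fintype.ofFinite G
  have := invertibleOfNonzero (Nat.cast_ne_zero.mpr Nat.card_pos.ne' : (Nat.card G : k) ≠ 0)
  apply Nat.cast_injective (R := k)
  rw [← card_inv_mul_sum_char_mul_char_eq_finrank, ← card_inv_mul_sum_char_mul_char_eq_finrank, h]

theorem exists_intertwiningMap_ne_zero_of_character_eq (h : σ.character = τ.character)
    {a : IntertwiningMap ρ σ} (ha : a ≠ 0) : ∃ b : IntertwiningMap ρ τ, b ≠ 0 := by
  have : Nontrivial (IntertwiningMap ρ σ) := nontrivial_of_ne a 0 ha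
  have hpos : 0 < finrank k (IntertwiningMap ρ τ) :=
    finrank_intertwiningMap_congr_character (ρ := ρ) h ▸ finrank_pos
  have := nontrivial_of_finrank_pos hpos
  exact exists_ne 0

theorem nonempty_equiv_of_character_eq [ρ.IsIrreducible] (h : ρ.character = τ.character) :
    Nonempty (ρ.Equiv τ) := by
  have := nontrivial_of_isIrreducible (ρ := ρ)
  obtain ⟨b, hb⟩ := exists_intertwiningMap_ne_zero_of_character_eq h
    (intertwiningMap_ne_zero_of_injective (a := .id ρ) Function.injective_id)
  have hinj : Function.Injective b.toLinearMap :=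
    (IsIrreducible.injective_or_eq_zero b).resolve_right hb
  exact ⟨b.ofBijective ⟨hinj, (LinearMap.injective_iff_surjective_of_finrank_eq_finrank
    (finrank_eq_of_character_eq h)).mp hinj⟩⟩

theorem exists_surjective_of_character_eq_add_self [σ.IsIrreducible]
    (h : τ.character = σ.character + σ.character) {a : IntertwiningMap ρ τ} (ha : a ≠ 0) :
    ∃ b : IntertwiningMap ρ σ, Function.Surjective b.toLinearMap := by
  obtain ⟨c, hc⟩ := exists_intertwiningMap_ne_zero_of_character_eq
    (h.trans (character_prod σ σ).symm) ha
  by_contra! hns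
  have hzero (b : IntertwiningMap ρ σ) : b = 0 :=
    (IsIrreducible.surjective_or_eq_zero b).resolve_left (hns b)
  refine hc (DFunLike.ext _ _ fun v => Prod.ext ?_ ?_)
  · exact DFunLike.congr_fun (hzero ((IntertwiningMap.fst k σ σ).comp c)) v
  · exact DFunLike.congr_fun (hzero ((IntertwiningMap.snd k σ σ).comp c)) v

theorem character_eq_of_add_eq_add_self [Nontrivial V] [Nontrivial U] [σ.IsIrreducible]
    (h : ρ.character + τ.character = σ.character + σ.character) :
    ρ.character = σ.character := by
  have hprod := (character_prod ρ τ).trans h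
  obtain ⟨a, ha⟩ := exists_surjective_of_character_eq_add_self hprod
    (intertwiningMap_ne_zero_of_injective (a := .inl k ρ τ) LinearMap.inl_injective)
  obtain ⟨b, hb⟩ := exists_surjective_of_character_eq_add_self hprod
    (intertwiningMap_ne_zero_of_injective (a := .inr k ρ τ) LinearMap.inr_injective)
  have hsum : finrank k V + finrank k U = finrank k W + finrank k W := by
    have h1 := congrFun h 1
    simp only [Pi.add_apply, char_one] at h1
    exact_mod_cast h1
  have hdim : finrank k V = finrank k W := by
    have := LinearMap.finrank_le_finrank_of_surjective ha
    have := LinearMap.finrank_le_finrank_of_surjective hb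
    omega
  exact char_iso (a.ofBijective
    ⟨(LinearMap.injective_iff_surjective_of_finrank_eq_finrank hdim).mpr ha, ha⟩)

end Characters

section ChangeOfScalars

variable {K E G U V : Type*} [Field K] [Field E] [Algebra K E] [Group G]
  [AddCommGroup U] [Module K U] [Module E U] [IsScalarTower K E U]
  [AddCommGroup V] [Module K V]

theorem trace_restrictScalars [FiniteDimensional K E] [FiniteDimensional E U] (f : End E U) :
    LinearMap.trace K U (f.restrictScalars K) = Algebra.trace K E (LinearMap.trace E U f) := by
  let b := finBasis K E
  let c := finBasis E U
  rw [LinearMap.trace_eq_matrix_trace K (b.smulTower' c), LinearMap.restrictScalars_toMatrix,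
    LinearMap.trace_eq_matrix_trace E c, Matrix.trace, Matrix.trace, map_sum,
    Fintype.sum_prod_type]
  simp only [Algebra.trace_eq_matrix_trace b]
  rfl

/-- An `E`-linear representation regarded as a representation over the subfield `K`, on the same
underlying space. -/
def restrictScalarsRep (K : Type*) [Field K] [Algebra K E] [Module K U] [IsScalarTower K E U]
    (τ : Representation E G U) : Representation K G U where
  toFun g := (τ g).restrictScalars K
  map_one' := by rw [map_one]; rfl
  map_mul' g h := by rw [map_mul]; rfl

theorem character_restrictScalarsRep [FiniteDimensional K E] [FiniteDimensional E U]
    (τ : Representation E G U) (g : G) :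
    (restrictScalarsRep K τ).character g = Algebra.trace K E (τ.character g) :=
  trace_restrictScalars (τ g)

/-- The representation `E ⊗ V` over an extension field `E` obtained from a representation on `V`
by extending scalars. -/
noncomputable def baseChangeRep (E : Type*) [Field E] [Algebra K E] (ρ : Representation K G V) :
    Representation E G (E ⊗[K] V) :=
  (Module.End.baseChangeHom K E V : End K V →* End E (E ⊗[K] V)).comp ρ

theorem character_baseChangeRep [FiniteDimensional K V] (ρ : Representation K G V) (g : G) :
    (baseChangeRep E ρ).character g = algebraMap K E (ρ.character g) :=
  LinearMap.trace_baseChange (ρ g) E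

variable [CharZero K] [FiniteDimensional K V]

theorem mem_range_algebraMap_of_baseChange_eq_smul_one [Nontrivial V] {f : End K V} {c : E}
    (h : f.baseChange E = c • 1) : c ∈ (algebraMap K E).range := by
  have htrace : algebraMap K E (LinearMap.trace K V f) = c * (finrank K V : E) := by
    rw [← LinearMap.trace_baseChange, h, map_smul, LinearMap.trace_one, finrank_baseChange,
      smul_eq_mul]
  have := charZero_of_injective_algebraMap (algebraMap K E).injective
  have hdim : (finrank K V : E) ≠ 0 := Nat.cast_ne_zero.mpr finrank_pos.ne'
  exact ⟨LinearMap.trace K V f / finrank K V, by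
    rw [map_div₀, htrace, map_natCast, mul_div_cancel_right₀ _ hdim]⟩

theorem not_isIrreducible_baseChangeRep {ρ : Representation K G V} {f : End K V}
    (hf : ∀ g, Commute f (ρ g)) {κ : K} (hff : f * f = κ • 1) (hκ : ¬ IsSquare κ) {s : E}
    (hs : s * s = algebraMap K E κ) : ¬ (baseChangeRep E ρ).IsIrreducible := by
  intro _
  have := nontrivial_of_isIrreducible (ρ := baseChangeRep E ρ)
  have : Nontrivial V := by
    by_contra! h
    exact not_subsingleton (E ⊗[K] V) inferInstance
  let fE : End E (E ⊗[K] V) := Module.End.baseChangeHom K E V f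
  have hne (c : E) (hc : c * c = algebraMap K E κ) : fE ≠ c • 1 := fun h => by
    obtain ⟨t, rfl⟩ := mem_range_algebraMap_of_baseChange_eq_smul_one h
    exact hκ ⟨t, (algebraMap K E).injective (by rw [map_mul, hc])⟩
  have hcomm (g : G) : Commute (fE - s • 1) (baseChangeRep E ρ g) :=
    Commute.sub_left (R := End E (E ⊗[K] V)) ((hf g).map (Module.End.baseChangeHom K E V))
      ((Commute.one_left _).smul_left s)
  have hprod : (fE - s • 1) * (fE + s • 1) = 0 := by
    have hfE : fE * fE = (s * s) • 1 := by
      rw [← map_mul, hff, map_smul, map_one, hs, algebraMap_smul]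
    refine LinearMap.ext fun v => ?_
    have hv : fE (fE v) = s • s • v := by
      rw [smul_smul]
      exact LinearMap.congr_fun hfE v
    change fE (fE v + s • v) - s • (fE v + s • v) = 0
    rw [map_add, map_smul, smul_add, hv]
    abel
  rcases eq_zero_or_eq_zero_of_commute_of_mul_eq_zero hcomm hprod with h | h
  · exact hne s hs (sub_eq_zero.mp h)
  · exact hne (-s) (by rwa [neg_mul_neg])
      ((eq_neg_of_add_eq_zero_left h).trans (neg_smul s 1).symm)

theorem exists_commute_mul_self_eq_smul_one [Finite G] [Algebra.IsQuadraticExtension K E]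
    [FiniteDimensional E U] {ρ : Representation K G V} [ρ.IsIrreducible]
    {τ : Representation E G U} (h : ∀ g, algebraMap K E (ρ.character g) = 2 * τ.character g)
    {κ : K} {s : E} (hs : s * s = algebraMap K E κ) :
    ∃ f : End K V, (∀ g, Commute f (ρ g)) ∧ f * f = κ • 1 := by
  have := charZero_of_injective_algebraMap (algebraMap K E).injective
  have hchar : ρ.character = (restrictScalarsRep K τ).character := funext fun g => by
    have hτ : τ.character g = algebraMap K E (ρ.character g / 2) := by
      rw [map_div₀, map_ofNat, h, mul_div_cancel_left₀ _ two_ne_zero]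
    rw [character_restrictScalarsRep, hτ, Algebra.trace_algebraMap,
      Algebra.IsQuadraticExtension.finrank_eq_two K E, nsmul_eq_mul, Nat.cast_ofNat,
      mul_div_cancel₀ _ two_ne_zero]
  have := FiniteDimensional.trans K E U
  obtain ⟨φ⟩ := nonempty_equiv_of_character_eq hchar
  let c : End K U ≃ₐ[K] End K V := φ.toLinearEquiv.symm.conjAlgEquiv K
  have hc (g : G) : c (restrictScalarsRep K τ g) = ρ g := φ.symm.conj_apply_self g
  have hcomm (g : G) : Commute (Algebra.lsmul K K U s) (restrictScalarsRep K τ g) :=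
    LinearMap.ext fun u => ((τ g).map_smul s u).symm
  refine ⟨c (Algebra.lsmul K K U s), fun g => hc g ▸ (hcomm g).map c, ?_⟩
  rw [← map_mul, ← map_mul, hs, AlgHom.commutes, AlgEquiv.commutes, Algebra.algebraMap_eq_smul_one]

end ChangeOfScalars

section Affording

variable {k K E Ω G V S : Type*} [Field k] [Field K] [Field E] [Field Ω] [Algebra k Ω]
  [Algebra K E] [Algebra K Ω] [Algebra E Ω] [IsScalarTower K E Ω] [Group G]
  [AddCommGroup V] [AddCommGroup S] [Module Ω S]

/-- The function `χ` with values in the extension `Ω` of `k` is the character of a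
finite-dimensional representation over `k`. The representation space is taken to be `k ^ d` in
order to stay in one universe. -/
def IsAffordedOver (k : Type*) [Field k] [Algebra k Ω] (χ : G → Ω) : Prop :=
  ∃ (d : ℕ) (τ : Representation k G (Fin d → k)), ∀ g, algebraMap k Ω (τ.character g) = χ g

theorem isAffordedOver_of_character_eq [Module k V] [FiniteDimensional k V]
    (ρ : Representation k G V) {χ : G → Ω} (h : ∀ g, algebraMap k Ω (ρ.character g) = χ g) :
    IsAffordedOver k χ := by
  let e := (finBasis k V).equivFun
  refine ⟨finrank k V, MonoidHom.comp (e.conjAlgEquiv k) ρ, fun g => ?_⟩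
  rw [← h]
  exact congrArg _ (LinearMap.trace_conj' (ρ g) e)

variable [FiniteDimensional Ω S] [Finite G] {σ : Representation Ω G S} [σ.IsIrreducible]

theorem isAffordedOver_of_not_isIrreducible [CharZero k] [Module k V] [FiniteDimensional k V]
    {ρ : Representation k G V} (h : ∀ g, algebraMap k Ω (ρ.character g) = 2 * σ.character g)
    (hρ : ¬ ρ.IsIrreducible) : IsAffordedOver k σ.character := by
  have := charZero_of_injective_algebraMap (algebraMap k Ω).injective
  have := nontrivial_of_isIrreducible (ρ := σ)
  have hdim : finrank k V = 2 * finrank Ω S := by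
    have h1 := h 1
    rw [char_one, char_one, map_natCast] at h1
    exact_mod_cast h1
  have : Nontrivial V := nontrivial_of_finrank_pos (R := k) (by simp [hdim, finrank_pos])
  obtain ⟨P, Q, hPQ, hP, hQ⟩ := exists_isCompl_nontrivial_of_not_isIrreducible hρ
  have hsum : (baseChangeRep Ω P.toRepresentation).character +
      (baseChangeRep Ω Q.toRepresentation).character = σ.character + σ.character := by
    ext g
    simp only [Pi.add_apply, character_baseChangeRep, ← map_add, ← two_mul, ← h,
      character_eq_add_of_isCompl hPQ]
  refine isAffordedOver_of_character_eq P.toRepresentation fun g => ?_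
  rw [← character_baseChangeRep, character_eq_of_add_eq_add_self hsum]

theorem isAffordedOver_iff_exists_commute [CharZero K] [Algebra.IsQuadraticExtension K E]
    [Module K V] [FiniteDimensional K V] {ρ : Representation K G V}
    (hρ : ∀ g, algebraMap K Ω (ρ.character g) = 2 * σ.character g)
    (hK : ¬ IsAffordedOver K σ.character) {κ : K} (hκ : ¬ IsSquare κ) {s : E}
    (hs : s * s = algebraMap K E κ) :
    IsAffordedOver E σ.character ↔
      ∃ f : End K V, (∀ g, Commute f (ρ g)) ∧ f * f = κ • 1 := by
  constructor
  · rintro ⟨d, τ, hτ⟩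
    have : ρ.IsIrreducible := by
      by_contra hred
      exact hK (isAffordedOver_of_not_isIrreducible hρ hred)
    refine exists_commute_mul_self_eq_smul_one (τ := τ) (fun g => ?_) hs
    apply (algebraMap E Ω).injective
    rw [← IsScalarTower.algebraMap_apply, hρ, map_mul, map_ofNat, hτ]
  · rintro ⟨f, hf, hff⟩
    have := charZero_of_injective_algebraMap (algebraMap K E).injective
    refine isAffordedOver_of_not_isIrreducible (fun g => ?_)
      (not_isIrreducible_baseChangeRep hf hff hκ hs)
    rw [character_baseChangeRep, ← IsScalarTower.algebraMap_apply, hρ]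

end Affording

section MatrixRepresentations

variable {k G ι : Type*} [Field k] [Group G] [Fintype ι] [DecidableEq ι]

/-- The representation on column vectors defined by a homomorphism to matrices. -/
def matrixRep (ρ : G →* Matrix ι ι k) : Representation k G (ι → k) :=
  MonoidHom.comp (Matrix.toLinAlgEquiv' : Matrix ι ι k ≃ₐ[k] End k (ι → k)) ρ

theorem character_matrixRep (ρ : G →* Matrix ι ι k) (g : G) :
    (matrixRep ρ).character g = (ρ g).trace :=
  Matrix.trace_toLin'_eq (ρ g)

theorem exists_matrix_commute_iff (ρ : G →* Matrix ι ι k) (κ : k) :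
    (∃ f : Matrix ι ι k, (∀ g, f * ρ g = ρ g * f) ∧ f * f = κ • 1) ↔
      ∃ f : End k (ι → k), (∀ g, Commute f (matrixRep ρ g)) ∧ f * f = κ • 1 := by
  let e : Matrix ι ι k ≃ₐ[k] End k (ι → k) := Matrix.toLinAlgEquiv'
  refine Iff.trans ?_ e.surjective.exists.symm
  refine exists_congr fun f => and_congr (forall_congr' fun g => ?_) ?_
  · exact e.injective.eq_iff.symm.trans (by rw [map_mul, map_mul]; rfl)
  · rw [← e.injective.eq_iff, map_mul, map_smul, map_one]

theorem isIrreducible_matrixRep [Nonempty ι] {ρ : G →* Matrix ι ι k}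
    (h : ∀ W : Submodule k (ι → k), (∀ g, ∀ v ∈ W, (ρ g).mulVec v ∈ W) → W = ⊥ ∨ W = ⊤) :
    (matrixRep ρ).IsIrreducible where
  toNontrivial := nontrivial_subrepresentation
  eq_bot_or_eq_top P := (h P.toSubmodule fun g _ hv => P.apply_mem_toSubmodule g hv).imp
    (fun hP => Subrepresentation.toSubmodule_injective hP)
    (fun hP => Subrepresentation.toSubmodule_injective hP)

theorem affords_iff_isAffordedOver {F : IntermediateField ℚ ℂ} {χ : G → ℂ} :
    Affords F χ ↔ IsAffordedOver F χ := by
  constructor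
  · rintro ⟨d, ρ, hρ⟩
    exact ⟨d, matrixRep ρ, fun g => (congrArg _ (character_matrixRep ρ g)).trans (hρ g)⟩
  · rintro ⟨d, τ, hτ⟩
    let e : End F (Fin d → F) ≃ₐ[F] Matrix (Fin d) (Fin d) F := LinearMap.toMatrixAlgEquiv'
    refine ⟨d, MonoidHom.comp e τ, fun g => ?_⟩
    rw [← hτ]
    exact congrArg Subtype.val
      (LinearMap.trace_eq_matrix_trace F (Pi.basisFun F (Fin d)) (τ g)).symm

end MatrixRepresentations

theorem isUnit_of_mul_self_eq_smul_one {k A : Type*} [Field k] [Semiring A] [Algebra k A] {a : A}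
    {κ : k} (hκ : κ ≠ 0) (h : a * a = κ • 1) : IsUnit a :=
  isUnit_iff_exists.mpr ⟨κ⁻¹ • a, by rw [mul_smul_comm, h, inv_smul_smul₀ hκ],
    by rw [smul_mul_assoc, h, inv_smul_smul₀ hκ]⟩

section QuadraticExtensions

open IntermediateField

variable {K L : Type*} [Field K] [Field L] [Algebra K L]

theorem exists_mul_self_eq_algebraMap [CharZero K] [Algebra.IsQuadraticExtension K L] :
    ∃ (κ : K) (s : L), ¬ IsSquare κ ∧ s * s = algebraMap K L κ := by
  have hdeg : finrank K L = 2 := Algebra.IsQuadraticExtension.finrank_eq_two K L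
  have hroots : (primitiveRoots (finrank K L) K).Nonempty :=
    ⟨-1, by rw [hdeg, mem_primitiveRoots two_pos]; exact IsPrimitiveRoot.neg_one 0 (by norm_num)⟩
  obtain ⟨s, ⟨κ, hκ⟩, htop⟩ := exists_root_adjoin_eq_top_of_isCyclic K L hroots
  rw [hdeg, sq] at hκ
  refine ⟨κ, s, ?_, hκ.symm⟩
  rintro ⟨t, rfl⟩
  have hmem : s ∈ (⊥ : IntermediateField K L) := by
    rcases mul_self_eq_mul_self_iff.mp (hκ.symm.trans (map_mul _ t t)) with rfl | rfl
    · exact IntermediateField.algebraMap_mem _ t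
    · exact neg_mem (IntermediateField.algebraMap_mem _ t)
  rw [adjoin_simple_eq_bot_iff.mpr hmem, bot_eq_top_iff_finrank_eq_one, hdeg] at htop
  omega

theorem finrank_adjoin_of_mul_self_eq {κ : K} (hκ : ¬ IsSquare κ) {s : L}
    (hs : s * s = algebraMap K L κ) : finrank K K⟮s⟯ = 2 := by
  have hirr : Irreducible (Polynomial.X ^ 2 - Polynomial.C κ) :=
    X_pow_sub_C_irreducible_of_prime Nat.prime_two fun t ht => hκ ⟨t, by rw [← sq, ht]⟩
  have hmonic := Polynomial.monic_X_pow_sub_C κ two_ne_zero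
  have hroot : Polynomial.aeval s (Polynomial.X ^ 2 - Polynomial.C κ) = 0 := by simp [sq, hs]
  rw [adjoin.finrank ⟨_, hmonic, hroot⟩,
    ← minpoly.eq_of_irreducible_of_monic hirr hroot hmonic, Polynomial.natDegree_X_pow_sub_C]

end QuadraticExtensions

section RealFields

open IntermediateField

/-- The field of real numbers inside `ℂ`. -/
noncomputable def realSubfield : IntermediateField ℚ ℂ :=
  (Complex.ofRealAm.restrictScalars ℚ).fieldRange

theorem le_realSubfield_iff {F : IntermediateField ℚ ℂ} :
    F ≤ realSubfield ↔ ∀ x : F, ∃ r : ℝ, (x : ℂ) = r := by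
  rw [SetLike.le_def, Subtype.forall]
  exact forall₂_congr fun x _ => exists_congr fun r => eq_comm

theorem adjoin_range_le_realSubfield {α : Type*} {χ : α → ℂ} (h : ∀ a, ∃ r : ℝ, χ a = r) :
    adjoin ℚ (Set.range χ) ≤ realSubfield := by
  rw [adjoin_le_iff, Set.range_subset_iff]
  exact fun a => (h a).imp fun _ => Eq.symm

variable {K F : IntermediateField ℚ ℂ} [FiniteDimensional ℚ K]

theorem isQuadraticExtension_extendScalars (hKF : K ≤ F) (h : finrank ℚ F = 2 * finrank ℚ K) :
    Algebra.IsQuadraticExtension K (extendScalars hKF) where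
  finrank_eq_two' := by
    have htower : finrank ℚ K * finrank K (extendScalars hKF) = finrank ℚ F :=
      finrank_mul_finrank ℚ K (extendScalars hKF)
    rw [h, mul_comm] at htower
    exact Nat.eq_of_mul_eq_mul_right finrank_pos htower

theorem exists_pos_mul_self_eq_of_le_realSubfield (hKF : K ≤ F)
    (h : finrank ℚ F = 2 * finrank ℚ K) (hF : F ≤ realSubfield) :
    ∃ κ : K, (∃ r : ℝ, 0 < r ∧ (κ : ℂ) = r) ∧ ¬ IsSquare κ ∧ ∃ s ∈ F, s * s = κ := by
  have := isQuadraticExtension_extendScalars hKF h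
  obtain ⟨κ, s, hκ, hs⟩ := exists_mul_self_eq_algebraMap (K := K) (L := extendScalars hKF)
  have hs' : (s : ℂ) * s = κ := congrArg Subtype.val hs
  obtain ⟨r, hr⟩ : ∃ r : ℝ, (s : ℂ) = r := le_realSubfield_iff.mp hF s
  have hκr : (κ : ℂ) = (r * r : ℝ) := by rw [← hs', hr, Complex.ofReal_mul]
  refine ⟨κ, ⟨r * r, mul_self_pos.mpr ?_, hκr⟩, hκ, s, s.2, hs'⟩
  rintro rfl
  exact hκ ⟨0, Subtype.ext (by simp [hκr])⟩

theorem exists_le_realSubfield_mul_self_eq (hK : K ≤ realSubfield) {κ : K}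
    (hpos : ∃ r : ℝ, 0 < r ∧ (κ : ℂ) = r) (hκ : ¬ IsSquare κ) :
    ∃ F : IntermediateField ℚ ℂ, K ≤ F ∧ F ≤ realSubfield ∧ FiniteDimensional ℚ F ∧
      finrank ℚ F = 2 * finrank ℚ K ∧ ∃ s ∈ F, s * s = κ := by
  obtain ⟨r, hr, hκr⟩ := hpos
  let s : ℂ := (√r : ℝ)
  have hs : s * s = κ := by rw [hκr, ← Complex.ofReal_mul, Real.mul_self_sqrt hr.le]
  have hdeg : finrank K K⟮s⟯ = 2 := finrank_adjoin_of_mul_self_eq hκ hs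
  have : FiniteDimensional K K⟮s⟯ := .of_finrank_pos (by rw [hdeg]; exact two_pos)
  have hreal : K⟮s⟯ ≤ extendScalars hK := adjoin_simple_le_iff.mpr ⟨√r, rfl⟩
  refine ⟨K⟮s⟯.restrictScalars ℚ, fun x hx => IntermediateField.algebraMap_mem K⟮s⟯ ⟨x, hx⟩, hreal,
    FiniteDimensional.trans ℚ K K⟮s⟯, ?_, s, mem_adjoin_simple_self K s, hs⟩
  exact (finrank_mul_finrank ℚ K K⟮s⟯).symm.trans (by rw [hdeg, mul_comm])

theorem affords_iff_exists_matrix_commute {G S : Type*} [Group G] [Finite G] [AddCommGroup S]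
    [Module ℂ S] [FiniteDimensional ℂ S] {σ : Representation ℂ G S} [σ.IsIrreducible]
    {ι : Type*} [Fintype ι] [DecidableEq ι] {ρ : G →* Matrix ι ι K}
    (hρ : ∀ g, ((ρ g).trace : ℂ) = 2 * σ.character g) (hK : ¬ Affords K σ.character)
    (hKF : K ≤ F) (hdeg : finrank ℚ F = 2 * finrank ℚ K) {κ : K} (hκ : ¬ IsSquare κ)
    (hs : ∃ s ∈ F, s * s = κ) :
    Affords F σ.character ↔
      ∃ f : Matrix ι ι K, (∀ g, f * ρ g = ρ g * f) ∧ f * f = κ • 1 := by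
  obtain ⟨s, hsF, hsκ⟩ := hs
  have := isQuadraticExtension_extendScalars hKF hdeg
  have hρ' (g : G) : algebraMap K ℂ ((matrixRep ρ).character g) = 2 * σ.character g := by
    rw [character_matrixRep]
    exact hρ g
  rw [affords_iff_isAffordedOver] at hK
  rw [affords_iff_isAffordedOver, exists_matrix_commute_iff]
  exact isAffordedOver_iff_exists_commute (E := extendScalars hKF) hρ' hK hκ
    (s := ⟨s, hsF⟩) (Subtype.ext hsκ)

end RealFields

set_option synthInstance.maxHeartbeats 1000000 in
/-- For a real-valued irreducible character `χ` with Schur index `m_ℚ(χ) = 2`, and a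
representation `ρ` over `K = ℚ(χ)` with character `2χ`, the existence of a real minimal
splitting field is equivalent to the existence of a `G`-equivariant isomorphism `f`
with `f² = κ·Id`, `κ > 0` and `√κ ∉ K`. -/
theorem real_minimal_splitting_field_iff
    {G : Type*} [Group G] [Fintype G] (χ : G → ℂ)
    -- `χ` is an irreducible complex character
    (hχirr : ∃ (d : ℕ) (ρ : G →* Matrix (Fin d) (Fin d) ℂ),
      (∀ g : G, (ρ g).trace = χ g) ∧
      (∀ W : Submodule ℂ (Fin d → ℂ),
        (∀ g : G, ∀ v ∈ W, (ρ g).mulVec v ∈ W) → W = ⊥ ∨ W = ⊤))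
    -- `χ` is real valued
    (hreal : ∀ g : G, ∃ r : ℝ, χ g = (r : ℂ))
    -- the Schur index of `χ` over `ℚ` is `2`:
    -- `K = ℚ(χ)` does not afford `χ`, but some extension of degree `2` over `K` does
    (hSchur1 : ¬ Affords (IntermediateField.adjoin ℚ (Set.range χ)) χ)
    (hSchur2 : ∃ F : IntermediateField ℚ ℂ,
      IntermediateField.adjoin ℚ (Set.range χ) ≤ F ∧ FiniteDimensional ℚ F ∧
      finrank ℚ F = 2 * finrank ℚ (IntermediateField.adjoin ℚ (Set.range χ)) ∧
      Affords F χ)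
    (n : ℕ)
    (ρ : G →* Matrix (Fin (2 * n)) (Fin (2 * n)) (IntermediateField.adjoin ℚ (Set.range χ)))
    -- `ρ` has character `2χ`
    (hρ : ∀ g : G, (((ρ g).trace : IntermediateField.adjoin ℚ (Set.range χ)) : ℂ) = 2 * χ g) :
    -- (1) there is a minimal splitting field `F ⊆ ℝ`
    (∃ F : IntermediateField ℚ ℂ,
        IntermediateField.adjoin ℚ (Set.range χ) ≤ F ∧
        (∀ x : F, ∃ r : ℝ, (x : ℂ) = (r : ℂ)) ∧
        FiniteDimensional ℚ F ∧
        finrank ℚ F = 2 * finrank ℚ (IntermediateField.adjoin ℚ (Set.range χ)) ∧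
        Affords F χ) ↔
    -- (2) there is a `G`-equivariant `K`-linear isomorphism `f` with `f² = κ·Id`,
    -- `κ > 0` and `√κ ∉ K`
    (∃ (f : Matrix (Fin (2 * n)) (Fin (2 * n)) (IntermediateField.adjoin ℚ (Set.range χ)))
        (κ : IntermediateField.adjoin ℚ (Set.range χ)),
        IsUnit f ∧
        (∀ g : G, f * ρ g = ρ g * f) ∧
        f * f = κ • (1 : Matrix (Fin (2 * n)) (Fin (2 * n))
          (IntermediateField.adjoin ℚ (Set.range χ))) ∧
        (∃ r : ℝ, 0 < r ∧ (κ : ℂ) = (r : ℂ)) ∧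
        ¬ ∃ s : IntermediateField.adjoin ℚ (Set.range χ), s * s = κ) := by
  obtain ⟨d, σ, hσ, hirr⟩ := hχirr
  have hd : d ≠ 0 := by
    rintro rfl
    exact hSchur1 ⟨0, 1, fun g => by simp [← hσ]⟩
  have : Nonempty (Fin d) := ⟨0, hd.pos⟩
  have := isIrreducible_matrixRep hirr
  obtain rfl : (matrixRep σ).character = χ :=
    funext fun g => (character_matrixRep σ g).trans (hσ g)
  set K := IntermediateField.adjoin ℚ (Set.range (matrixRep σ).character)
  have : FiniteDimensional ℚ K := by
    obtain ⟨F, -, _, hdeg, -⟩ := hSchur2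
    exact .of_finrank_pos (by have : 0 < finrank ℚ F := finrank_pos; omega)
  have hK : K ≤ realSubfield := adjoin_range_le_realSubfield hreal
  have key {F : IntermediateField ℚ ℂ} := affords_iff_exists_matrix_commute (F := F) hρ hSchur1
  constructor
  · rintro ⟨F, hKF, hF, -, hdeg, hχF⟩
    obtain ⟨κ, hpos, hκ, hs⟩ :=
      exists_pos_mul_self_eq_of_le_realSubfield hKF hdeg (le_realSubfield_iff.mpr hF)
    obtain ⟨f, hf, hff⟩ := (key hKF hdeg hκ hs).mp hχF
    have hκ0 : κ ≠ 0 := fun h0 => hκ (h0 ▸ IsSquare.zero)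
    have hunit : IsUnit f := isUnit_of_mul_self_eq_smul_one hκ0 hff
    exact ⟨f, κ, hunit, hf, hff, hpos, fun ⟨t, ht⟩ => hκ ⟨t, ht.symm⟩⟩
  · rintro ⟨f, κ, -, hf, hff, hpos, hns⟩
    have hκ : ¬ IsSquare κ := fun ⟨t, ht⟩ => hns ⟨t, ht.symm⟩
    obtain ⟨F, hKF, hF, hfin, hdeg, hs⟩ := exists_le_realSubfield_mul_self_eq hK hpos hκ
    exact ⟨F, hKF, le_realSubfield_iff.mp hF, hfin, hdeg, (key hKF hdeg hκ hs).mpr ⟨f, hf, hff⟩⟩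
end

section
/- Let G be a finite group and χ an irreducible complex character of G which is afforded by a real representation. Then there exists a minimal splitting field F for χ with F ⊆ ℝ; that is, there exists a subfield F of ℝ containing ℚ(χ) with [F : ℚ(χ)] = m_ℚ(χ) such that χ is afforded by an F-representation. -/
open Matrix Module

/-!
Let `ρ` be a real representation of dimension `n` with the irreducible character `χ`, and put
`K = ℚ(χ)`. The `K`-algebra `A` spanned by the matrices `ρ g` is a `K`-form of `Mₙ(ℝ)`.

If `χ` is afforded over `L ⊇ K`, then `A` acts faithfully on `Lⁿ`, so a minimal left ideal `A b`
of `A` embeds into `Lⁿ`. Since `A b` has dimension `n * rank b` over `K`, there is a nonzero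
`b ∈ A` with `rank b ≤ [L : K]`. So it suffices to split `A` by a real field of degree at most
`rank b`, for a nonzero `b ∈ A` of least rank.

As `A` is dense in `Mₙ(ℝ)`, some `a ∈ A` makes `b * a` close to an idempotent of rank one, and then
`b * a` has a real eigenvalue `l ≠ 0` with a one-dimensional eigenspace. The degree of `l` over `K`
is at most `rank (b * a) ≤ rank b`, because the powers of `b * a` satisfy over `K` the linear
relation of length `rank (b * a) + 1` which they satisfy over `ℝ`. Finally, a polynomial in `b * a`
with coefficients in `K(l)` has rank one, and an algebra containing a matrix `v wᵀ` is split: it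
acts on `A v`, which is a `K(l)`-form of `ℝⁿ`.
-/

section MatrixForm

variable {K E n : Type*} [Field K] [Field E] [Algebra K E] [Fintype n]

theorem eq_zero_of_trace_mul_eq_zero {S : Set (Matrix n n E)} (hS : Submodule.span E S = ⊤)
    {z : Matrix n n E} (hz : ∀ s ∈ S, (z * s).trace = 0) : z = 0 := by
  refine Matrix.ext_iff_trace_mul_right.2 fun x => ?_
  have hle : Submodule.span E S ≤
      LinearMap.ker (Matrix.traceLinearMap n E E ∘ₗ LinearMap.mulLeft E z) :=
    Submodule.span_le.2 hz
  simpa using hle (hS ▸ Submodule.mem_top : x ∈ Submodule.span E S)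

variable [DecidableEq n]

/-- A `K`-form of the matrix algebra `Mₙ(E)`: a `K`-subalgebra which spans `Mₙ(E)` over `E` and
whose elements have traces in `K`. Equivalently, `E ⊗[K] A → Mₙ(E)` is an isomorphism, so `A` is
a central simple `K`-algebra split by `E`. -/
structure IsMatrixForm (A : Subalgebra K (Matrix n n E)) : Prop where
  span_eq_top : Submodule.span E (A : Set (Matrix n n E)) = ⊤
  trace_mem : ∀ a ∈ A, a.trace ∈ (algebraMap K E).range

namespace IsMatrixForm

variable {A : Subalgebra K (Matrix n n E)}

theorem linearIndependent (hA : IsMatrixForm A) {ι : Type*} {a : ι → Matrix n n E}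
    (haA : ∀ i, a i ∈ A) (ha : LinearIndependent K a) : LinearIndependent E a := by
  rw [linearIndependent_iff'] at ha ⊢
  intro s r hr i hi
  -- Traces of elements of `A` lie in `K`, so any `K`-linear functional of `E` can be applied to
  -- the coefficients of a linear relation.
  refine (Module.forall_dual_apply_eq_zero_iff K (r i)).1 fun φ => ?_
  refine ha s (fun j => φ (r j)) (eq_zero_of_trace_mul_eq_zero hA.span_eq_top fun x hx => ?_) i hi
  have htrace : ∀ j, ∃ t : K, algebraMap K E t = (a j * x).trace := fun j =>
    hA.trace_mem _ (mul_mem (haA j) hx)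
  choose t ht using htrace
  have hsum : ∑ j ∈ s, t j • r j = 0 := by
    have := congrArg (fun y => (y * x).trace) hr
    simpa [Finset.sum_mul, Matrix.trace_sum, ← ht, Algebra.smul_def (R := K), mul_comm] using this
  calc ((∑ j ∈ s, φ (r j) • a j) * x).trace
      = ∑ j ∈ s, φ (r j) • algebraMap K E (t j) := by
        simp only [Finset.sum_mul, Matrix.trace_sum, smul_mul_assoc, Matrix.trace_smul, ht]
    _ = algebraMap K E (φ (∑ j ∈ s, t j • r j)) := by
        simp only [map_sum, map_smul, smul_eq_mul, map_mul]
        simp only [Algebra.smul_def, mul_comm]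
    _ = 0 := by rw [hsum, map_zero, map_zero]

theorem finiteDimensional (hA : IsMatrixForm A) : FiniteDimensional K A := by
  let b := Basis.ofVectorSpace K A
  have hb : LinearIndependent E fun i => (b i : Matrix n n E) :=
    hA.linearIndependent (fun i => (b i).2)
      (b.linearIndependent.map' A.val.toLinearMap
        (LinearMap.ker_eq_bot.2 Subtype.val_injective))
  have := hb.finite
  exact Module.Finite.of_basis b

theorem adjoin (hA : IsMatrixForm A) (F : IntermediateField K E) :
    IsMatrixForm (Algebra.adjoin F (A : Set (Matrix n n E))) where
  span_eq_top := top_le_iff.1 <| hA.span_eq_top ▸ Submodule.span_mono Algebra.subset_adjoin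
  trace_mem := by
    have hspan : Subalgebra.toSubmodule (Algebra.adjoin F (A : Set (Matrix n n E))) =
        Submodule.span F (A : Set (Matrix n n E)) := by
      rw [Algebra.adjoin_eq_span]
      exact congrArg (fun M : Submonoid _ => Submodule.span F (M : Set (Matrix n n E)))
        (Submonoid.closure_eq A.toSubmonoid)
    have htrace : Submodule.span F (A : Set (Matrix n n E)) ≤
        (LinearMap.range (Algebra.linearMap F E)).comap
          ((Matrix.traceLinearMap n E E).restrictScalars F) :=
      Submodule.span_le.2 fun a ha => by
        obtain ⟨t, ht⟩ := hA.trace_mem a ha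
        exact ⟨algebraMap K F t, ht⟩
    exact fun a ha => htrace (hspan ▸ ha)

end IsMatrixForm

end MatrixForm

section LowerBound

variable {K E n : Type*} [Field K] [Field E] [Algebra K E] [Fintype n]

theorem card_mul_rank_le_finrank_range_mulRight (b : Matrix n n E) :
    Fintype.card n * b.rank ≤ finrank E (LinearMap.range (LinearMap.mulRight E b)) := by
  let R := Submodule.span E (Set.range b.row)
  let f : (n → R) →ₗ[E] Matrix n n E :=
    (Matrix.ofLinearEquiv E).toLinearMap ∘ₗ R.subtype.compLeft n
  have hf : Function.Injective f :=
    (Matrix.ofLinearEquiv E).injective.comp Subtype.val_injective.comp_left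
  have hle : LinearMap.range f ≤ LinearMap.range (LinearMap.mulRight E b) := by
    rintro _ ⟨r, rfl⟩
    have hr : ∀ i, ∃ x, b.vecMulLinear x = r i := fun i =>
      LinearMap.mem_range.1 (range_vecMulLinear b ▸ (r i).2)
    choose x hx using hr
    exact ⟨Matrix.of x, Matrix.ext fun i j => congrFun (hx i) j⟩
  calc Fintype.card n * b.rank = finrank E (n → R) := by
        rw [Module.finrank_pi_fintype, Finset.sum_const, Finset.card_univ, smul_eq_mul,
          Matrix.rank_eq_finrank_span_row]
    _ = finrank E (LinearMap.range f) := (LinearMap.finrank_range_of_inj hf).symm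
    _ ≤ finrank E (LinearMap.range (LinearMap.mulRight E b)) := Submodule.finrank_mono hle

variable [DecidableEq n]

theorem exists_finrank_range_mulRight_le {R V : Type*} [Ring R] [Nontrivial R] [Algebra K R]
    [FiniteDimensional K R] [AddCommGroup V] [Module K V] [FiniteDimensional K V]
    {ψ : R →ₐ[K] Module.End K V} (hψ : Function.Injective ψ) :
    ∃ b : R, b ≠ 0 ∧ finrank K (LinearMap.range (LinearMap.mulRight K b)) ≤ finrank K V := by
  have : IsArtinianRing R := IsArtinianRing.of_finite K R
  obtain ⟨I, hI, -⟩ := (eq_bot_or_exists_atom_le (⊤ : Ideal R)).resolve_left top_ne_bot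
  obtain ⟨b, hbI, hb⟩ := I.ne_bot_iff.1 hI.1
  obtain ⟨v, hv⟩ : ∃ v, ψ b v ≠ 0 := by
    by_contra! h
    exact hb ((map_eq_zero_iff ψ hψ).1 (LinearMap.ext h))
  let annihilator : Ideal R :=
    { carrier := {a | ψ a v = 0}
      add_mem' := fun {x y} (hx : _ = _) (hy : _ = _) => by simp [hx, hy]
      zero_mem' := by simp
      smul_mem' := fun c x (hx : _ = _) => by simp [hx] }
  have hdisj : I ⊓ annihilator = ⊥ :=
    (hI.le_iff.1 inf_le_left).resolve_right fun h => hv (inf_eq_left.1 h hbI)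
  let f : LinearMap.range (LinearMap.mulRight K b) →ₗ[K] V :=
    LinearMap.applyₗ v ∘ₗ ψ.toLinearMap ∘ₗ Submodule.subtype _
  have hf : Function.Injective f := by
    refine (injective_iff_map_eq_zero f).2 ?_
    rintro ⟨_, x, rfl⟩ hx
    exact Subtype.ext ((Submodule.mem_bot R).1 (hdisj ▸ ⟨I.mul_mem_left x hbI, hx⟩))
  exact ⟨b, hb, LinearMap.finrank_le_finrank_of_injective hf⟩

theorem card_mul_rank_le_finrank_range_mulRight_of_span {R : Type*} [Ring R] [Algebra K R]
    [FiniteDimensional K R] {j : R →ₐ[K] Matrix n n E}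
    (hj : Submodule.span E (Set.range j) = ⊤) (b : R) :
    Fintype.card n * (j b).rank ≤ finrank K (LinearMap.range (LinearMap.mulRight K b)) := by
  let c := Module.finBasis K (LinearMap.range (LinearMap.mulRight K b))
  let S := Submodule.span E (Set.range fun i => j (c i))
  have hS : ∀ y : LinearMap.range (LinearMap.mulRight K b), j y ∈ S := by
    intro y
    rw [← c.sum_repr y]
    simp only [Submodule.coe_sum, Submodule.coe_smul, map_sum, map_smul]
    exact sum_mem fun i _ => (S.restrictScalars K).smul_mem _ (Submodule.subset_span ⟨i, rfl⟩)
  have hle : LinearMap.range (LinearMap.mulRight E (j b)) ≤ S := by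
    rw [LinearMap.range_eq_map, ← hj, Submodule.map_span_le]
    rintro _ ⟨a, rfl⟩
    simpa using hS ⟨_, a, rfl⟩
  calc Fintype.card n * (j b).rank
      ≤ finrank E (LinearMap.range (LinearMap.mulRight E (j b))) :=
        card_mul_rank_le_finrank_range_mulRight _
    _ ≤ finrank E S := Submodule.finrank_mono hle
    _ ≤ finrank K (LinearMap.range (LinearMap.mulRight K b)) :=
        (finrank_range_le_card _).trans_eq (Fintype.card_fin _)

namespace IsMatrixForm

variable {A : Subalgebra K (Matrix n n E)}

theorem exists_card_mul_rank_le_finrank [Nonempty n] (hA : IsMatrixForm A) {V : Type*}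
    [AddCommGroup V] [Module K V] [FiniteDimensional K V] {ψ : A →ₐ[K] Module.End K V}
    (hψ : Function.Injective ψ) :
    ∃ b ∈ A, b ≠ 0 ∧ Fintype.card n * b.rank ≤ finrank K V := by
  have := hA.finiteDimensional
  obtain ⟨b, hb, hbV⟩ := exists_finrank_range_mulRight_le hψ
  exact ⟨b, b.2, by simpa using hb,
    (card_mul_rank_le_finrank_range_mulRight_of_span (j := A.val)
      (by simpa using hA.span_eq_top) b).trans hbV⟩

end IsMatrixForm

end LowerBound

section RealApproximation

variable {n : Type*} [Fintype n]

theorem exists_mul_eq_vecMulVec {𝕜 : Type*} [Field 𝕜] {b : Matrix n n 𝕜} (hb : b ≠ 0) :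
    ∃ (a : Matrix n n 𝕜) (p w : n → 𝕜), p ⬝ᵥ w = 1 ∧ b * a = vecMulVec p w := by
  classical
  obtain ⟨i, j, hij⟩ : ∃ i j, b i j ≠ 0 := by
    by_contra! h
    exact hb (Matrix.ext h)
  refine ⟨vecMulVec (Pi.single j (b i j)⁻¹) (Pi.single i 1), b *ᵥ Pi.single j (b i j)⁻¹,
    Pi.single i 1, ?_, mul_vecMulVec _ _ _⟩
  simp [hij]

variable [DecidableEq n]

theorem IsMatrixForm.dense {K : Type*} [Field K] [Algebra K ℝ] {A : Subalgebra K (Matrix n n ℝ)}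
    (hA : IsMatrixForm A) : Dense (A : Set (Matrix n n ℝ)) := by
  have : CharZero K := (algebraMap K ℝ).charZero
  intro x
  have hx : x ∈ Submodule.span ℝ (A : Set (Matrix n n ℝ)) := hA.span_eq_top ▸ Submodule.mem_top
  induction hx using Submodule.span_induction with
  | mem a ha => exact subset_closure ha
  | zero => exact subset_closure A.zero_mem
  | add x y _ _ hx hy =>
    exact map_mem_closure₂ continuous_add hx hy fun _ ha _ hb => A.add_mem ha hb
  | smul r x _ hx =>
    refine map_mem_closure₂ continuous_smul (Rat.denseRange_cast r) hx ?_
    rintro _ ⟨q, rfl⟩ a ha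
    have hqa : (q : ℝ) • a = (q : K) • a := by
      rw [← map_ratCast (algebraMap K ℝ), algebraMap_smul]
    exact hqa ▸ A.smul_mem ha (q : K)

open scoped Matrix.Norms.Operator

theorem finrank_eigenspace_le_one_of_norm_sub_vecMulVec_lt {𝕜 : Type*} [NormedField 𝕜]
    {c : Matrix n n 𝕜} {p w : n → 𝕜} {l : 𝕜} (h : ‖c - vecMulVec p w‖ < ‖l‖) :
    finrank 𝕜 (Module.End.eigenspace (Matrix.toLin' c) l) ≤ 1 := by
  let f : Module.End.eigenspace (Matrix.toLin' c) l →ₗ[𝕜] 𝕜 :=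
    dotProductBilin 𝕜 𝕜 w ∘ₗ Submodule.subtype _
  have hf : Function.Injective f := by
    refine (injective_iff_map_eq_zero f).2 ?_
    rintro ⟨z, hz⟩ (hwz : w ⬝ᵥ z = 0)
    refine Subtype.ext ?_
    have hcz : (c - vecMulVec p w) *ᵥ z = l • z := by
      rw [Matrix.sub_mulVec, vecMulVec_mulVec, hwz]
      simpa using Module.End.mem_eigenspace_iff.1 hz
    have hnorm : ‖l‖ * ‖z‖ ≤ ‖c - vecMulVec p w‖ * ‖z‖ := by
      rw [← norm_smul, ← hcz]
      exact Matrix.linfty_opNorm_mulVec _ _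
    by_contra hz0
    exact (le_of_mul_le_mul_right hnorm (norm_pos_iff.2 hz0)).not_gt h
  exact (LinearMap.finrank_le_finrank_of_injective hf).trans_eq (finrank_self 𝕜)

theorem eval_charpoly_vecMulVec {R : Type*} [CommRing R] [Nonempty n] {p w : n → R}
    (hpw : p ⬝ᵥ w = 1) (t : R) :
    (vecMulVec p w).charpoly.eval t = t ^ (Fintype.card n - 1) * (t - 1) := by
  obtain ⟨m, hm⟩ := Nat.exists_eq_add_one_of_ne_zero (Fintype.card_ne_zero (α := n))
  rw [Matrix.charpoly_vecMulVec, hpw, hm]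
  simp only [one_smul, Polynomial.eval_sub, Polynomial.eval_pow, Polynomial.eval_X,
    Nat.add_sub_cancel]
  ring

theorem eventually_exists_charpoly_isRoot [Nonempty n] {p w : n → ℝ} (hpw : p ⬝ᵥ w = 1) :
    ∀ᶠ c in nhds (vecMulVec p w), ∃ l : ℝ, 1 / 2 ≤ l ∧ c.charpoly.IsRoot l := by
  have hcont : ∀ t : ℝ, Continuous fun c : Matrix n n ℝ => c.charpoly.eval t := fun t => by
    simp only [Matrix.eval_charpoly]
    fun_prop
  have hneg : (vecMulVec p w).charpoly.eval (1 / 2) < 0 := by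
    rw [eval_charpoly_vecMulVec hpw]
    exact mul_neg_of_pos_of_neg (by positivity) (by norm_num)
  have hpos : 0 < (vecMulVec p w).charpoly.eval (3 / 2) := by
    rw [eval_charpoly_vecMulVec hpw]
    exact mul_pos (by positivity) (by norm_num)
  filter_upwards [(hcont _).continuousAt.eventually_lt_const hneg,
    (hcont _).continuousAt.eventually_const_lt hpos] with c hc₁ hc₂
  obtain ⟨l, hl, hroot⟩ := intermediate_value_Icc (by norm_num : (1 / 2 : ℝ) ≤ 3 / 2)
    c.charpoly.continuousOn ⟨hc₁.le, hc₂.le⟩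
  exact ⟨l, hl.1, hroot⟩

theorem eventually_exists_finrank_eigenspace_eq_one [Nonempty n] {p w : n → ℝ}
    (hpw : p ⬝ᵥ w = 1) :
    ∀ᶠ c in nhds (vecMulVec p w),
      ∃ l ≠ 0, finrank ℝ (Module.End.eigenspace (Matrix.toLin' c) l) = 1 := by
  have hnorm : Continuous fun c : Matrix n n ℝ => ‖c - vecMulVec p w‖ := by fun_prop
  have hclose : ∀ᶠ c in nhds (vecMulVec p w), ‖c - vecMulVec p w‖ < 1 / 2 :=
    hnorm.continuousAt.eventually_lt_const (by simp)
  filter_upwards [eventually_exists_charpoly_isRoot hpw, hclose] with c ⟨l, hl, hroot⟩ hc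
  have hl0 : 0 < l := by linarith
  have hbot : Module.End.eigenspace (Matrix.toLin' c) l ≠ ⊥ :=
    Module.End.hasEigenvalue_iff_isRoot_charpoly _ _ |>.2 (by rwa [Matrix.charpoly_toLin'])
  refine ⟨l, hl0.ne', le_antisymm ?_ (Submodule.one_le_finrank_iff.2 hbot)⟩
  refine finrank_eigenspace_le_one_of_norm_sub_vecMulVec_lt (hc.trans_le ?_)
  rwa [Real.norm_of_nonneg hl0.le]

theorem exists_mem_finrank_eigenspace_mul_eq_one {S : Set (Matrix n n ℝ)} (hS : Dense S)
    {b : Matrix n n ℝ} (hb : b ≠ 0) :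
    ∃ a ∈ S, ∃ l ≠ 0, finrank ℝ (Module.End.eigenspace (Matrix.toLin' (b * a)) l) = 1 := by
  obtain ⟨a₀, p, w, hpw, ha₀⟩ := exists_mul_eq_vecMulVec hb
  have : Nonempty n := by
    by_contra! h
    exact hb (Subsingleton.elim _ _)
  have hmul : Continuous fun a : Matrix n n ℝ => b * a := by fun_prop
  have hev := hmul.continuousAt.eventually (ha₀ ▸ eventually_exists_finrank_eigenspace_eq_one hpw)
  obtain ⟨a, ha, haS⟩ := (mem_closure_iff_frequently.1 (hS a₀)).and_eventually hev |>.exists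
  exact ⟨a, ha, haS⟩

end RealApproximation

section DegreeBound

open Polynomial

theorem aeval_apply_of_semiconj {R M N : Type*} [CommSemiring R] [AddCommMonoid M] [Module R M]
    [AddCommMonoid N] [Module R N] {f : Module.End R M} {g : Module.End R N} {i : M →ₗ[R] N}
    (h : ∀ x, i (f x) = g (i x)) (p : R[X]) (x : M) : i (aeval f p x) = aeval g p (i x) := by
  have hpow : ∀ k : ℕ, ∀ x, i ((f ^ k) x) = (g ^ k) (i x) := fun k => by
    induction k with
    | zero => simp
    | succ k ih => simp [pow_succ, ih, h]
  simp [aeval_eq_sum_range, LinearMap.sum_apply, hpow]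

theorem exists_monic_natDegree_eq_finrank_range_aeval_mul {K V : Type*} [Field K] [AddCommGroup V]
    [Module K V] [FiniteDimensional K V] (f : Module.End K V) :
    ∃ p : K[X], p.Monic ∧ p.natDegree = finrank K (LinearMap.range f) ∧ aeval f p * f = 0 := by
  let g : Module.End K (LinearMap.range f) := f.rangeRestrict ∘ₗ (LinearMap.range f).subtype
  refine ⟨g.charpoly, g.charpoly_monic, g.charpoly_natDegree, LinearMap.ext fun v => ?_⟩
  calc aeval f g.charpoly (f v)
      = (aeval g g.charpoly (f.rangeRestrict v) : LinearMap.range f) :=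
        (aeval_apply_of_semiconj (i := (LinearMap.range f).subtype) (fun _ => rfl) _
          (f.rangeRestrict v)).symm
    _ = 0 := by rw [LinearMap.aeval_self_charpoly]; rfl

variable {K E n : Type*} [Field K] [Field E] [Algebra K E] [Fintype n] [DecidableEq n]

theorem aeval_mulVec_of_mulVec_eq_smul {c : Matrix n n E} {l : E} {z : n → E}
    (hz : c *ᵥ z = l • z) (p : K[X]) : aeval c p *ᵥ z = aeval l p • z := by
  have hpow : ∀ k : ℕ, (c ^ k) *ᵥ z = l ^ k • z := fun k => by
    induction k with
    | zero => simp
    | succ k ih => rw [pow_succ, ← Matrix.mulVec_mulVec, hz, Matrix.mulVec_smul, ih, smul_smul,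
        pow_succ']
  simp only [aeval_eq_sum_range, Matrix.sum_mulVec, Matrix.smul_mulVec, hpow, Finset.sum_smul,
    smul_assoc]

theorem not_linearIndependent_pow_succ_rank (c : Matrix n n E) :
    ¬ LinearIndependent E fun k : Fin (c.rank + 1) => c ^ (k + 1 : ℕ) := by
  obtain ⟨p, hp, hdeg, hpc⟩ :=
    exists_monic_natDegree_eq_finrank_range_aeval_mul (Matrix.toLin' c)
  replace hdeg : p.natDegree = c.rank := hdeg
  replace hpc : aeval c p * c = 0 := by
    apply Matrix.toLinAlgEquiv'.injective
    rw [map_mul, ← aeval_algHom_apply, map_zero]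
    exact hpc
  refine Fintype.not_linearIndependent_iff.2 ⟨fun k => p.coeff k, ?_, Fin.last _, ?_⟩
  · rw [Fin.sum_univ_eq_sum_range (fun k => p.coeff k • c ^ (k + 1)), ← hdeg, ← hpc,
      aeval_eq_sum_range, Finset.sum_mul]
    simp only [pow_succ, smul_mul_assoc]
  · simpa only [Fin.val_last, ← hdeg, hp.coeff_natDegree] using one_ne_zero

namespace IsMatrixForm

variable {A : Subalgebra K (Matrix n n E)}

theorem exists_aeval_mul_eq_zero (hA : IsMatrixForm A) {c : Matrix n n E} (hc : c ∈ A) :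
    ∃ p : K[X], p ≠ 0 ∧ p.natDegree ≤ c.rank ∧ aeval c p * c = 0 := by
  have hdep : ¬ LinearIndependent K fun k : Fin (c.rank + 1) => c ^ (k + 1 : ℕ) := fun h =>
    not_linearIndependent_pow_succ_rank c (hA.linearIndependent (fun _ => pow_mem hc _) h)
  obtain ⟨s, hs, k, hk⟩ := Fintype.not_linearIndependent_iff.1 hdep
  have hcoeff : (∑ i : Fin (c.rank + 1), monomial (i : ℕ) (s i)).coeff k = s k := by
    simp [finsetSum_coeff, coeff_monomial, Fin.val_inj]
  refine ⟨∑ i : Fin (c.rank + 1), monomial (i : ℕ) (s i), fun h => hk ?_, ?_, ?_⟩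
  · rw [← hcoeff, h, coeff_zero]
  · exact natDegree_sum_le_of_forall_le _ _ fun i _ =>
      (natDegree_monomial_le _).trans (Nat.lt_succ_iff.1 i.2)
  · rw [map_sum, Finset.sum_mul, ← hs]
    simp only [aeval_monomial, pow_succ, Algebra.smul_def, mul_assoc]

theorem isIntegral_and_natDegree_minpoly_le_rank (hA : IsMatrixForm A) {c : Matrix n n E}
    (hc : c ∈ A) {l : E} (hl : l ≠ 0) {z : n → E} (hz : z ≠ 0) (hcz : c *ᵥ z = l • z) :
    IsIntegral K l ∧ (minpoly K l).natDegree ≤ c.rank := by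
  obtain ⟨p, hp, hdeg, hpc⟩ := hA.exists_aeval_mul_eq_zero hc
  have hpl : aeval l p = 0 := by
    have hzero : (l * aeval l p) • z = 0 := by
      rw [mul_smul, ← aeval_mulVec_of_mulVec_eq_smul hcz, ← Matrix.mulVec_smul, ← hcz,
        Matrix.mulVec_mulVec, hpc, Matrix.zero_mulVec]
    simpa [hl, hz] using hzero
  exact ⟨isAlgebraic_iff_isIntegral.1 ⟨p, hp, hpl⟩,
    (natDegree_le_natDegree (minpoly.degree_le_of_ne_zero K l hp hpl)).trans hdeg⟩

end IsMatrixForm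

end DegreeBound

section RankOne

open Polynomial

theorem exists_mem_adjoin_mul_eq_smul {K R : Type*} [Field K] [Ring R] [Algebra K R] {c : R}
    (hc : IsIntegral K c) {l : K} (hl : (minpoly K c).IsRoot l) :
    ∃ y ∈ Algebra.adjoin K {c}, y ≠ 0 ∧ c * y = l • y := by
  obtain ⟨q, hq⟩ := dvd_iff_isRoot.2 hl
  have hq0 : q ≠ 0 := fun h => minpoly.ne_zero hc (by rw [hq, h, mul_zero])
  refine ⟨aeval c q, aeval_mem_adjoin_singleton K c, fun h => ?_, ?_⟩
  · have hdeg := minpoly.degree_le_of_ne_zero K c hq0 h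
    rw [hq, degree_mul, degree_X_sub_C, degree_eq_natDegree hq0] at hdeg
    norm_cast at hdeg
    lia
  · have haeval := minpoly.aeval K c
    rw [hq, map_mul, map_sub, aeval_X, aeval_C, sub_mul, sub_eq_zero] at haeval
    rw [haeval, Algebra.smul_def]

variable {K E n : Type*} [Field K] [Field E] [Algebra K E] [Fintype n] [DecidableEq n]

theorem exists_eq_vecMulVec_of_finrank_eigenspace_eq_one {c y : Matrix n n E} {l : E}
    (hl : finrank E (Module.End.eigenspace (Matrix.toLin' c) l) = 1) (hcy : c * y = l • y) :
    ∃ v w, y = vecMulVec v w := by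
  obtain ⟨⟨v, hv⟩, -, hspan⟩ := finrank_eq_one_iff'.1 hl
  have hcol : ∀ j, ∃ t : E, t • v = y.col j := fun j => by
    have hj : y.col j ∈ Module.End.eigenspace (Matrix.toLin' c) l :=
      Module.End.mem_eigenspace_iff.2 (funext fun i => congrFun (congrFun hcy i) j)
    obtain ⟨t, ht⟩ := hspan ⟨_, hj⟩
    exact ⟨t, congrArg Subtype.val ht⟩
  choose w hw using hcol
  exact ⟨v, w, Matrix.ext fun i j => (congrFun (hw j) i).symm.trans (mul_comm _ _)⟩

theorem IsMatrixForm.exists_vecMulVec_mem {A : Subalgebra K (Matrix n n E)} (hA : IsMatrixForm A)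
    {c : Matrix n n E} (hc : c ∈ A) {l : K}
    (hl : finrank E (Module.End.eigenspace (Matrix.toLin' c) (algebraMap K E l)) = 1) :
    ∃ v w : n → E, v ≠ 0 ∧ w ≠ 0 ∧ vecMulVec v w ∈ A := by
  have := hA.finiteDimensional
  have hint : IsIntegral K c := (Algebra.IsIntegral.isIntegral (R := K) (⟨c, hc⟩ : A)).map A.val
  obtain ⟨⟨z, hz⟩, hz0, -⟩ := finrank_eq_one_iff'.1 hl
  have hroot : (minpoly K c).IsRoot l := by
    have h := aeval_mulVec_of_mulVec_eq_smul (Module.End.mem_eigenspace_iff.1 hz) (minpoly K c)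
    rw [minpoly.aeval, Matrix.zero_mulVec, eq_comm, smul_eq_zero] at h
    simpa [aeval_algebraMap_apply] using h.resolve_right (by simpa using hz0)
  obtain ⟨y, hyc, hy0, hcy⟩ := exists_mem_adjoin_mul_eq_smul hint hroot
  obtain ⟨v, w, rfl⟩ := exists_eq_vecMulVec_of_finrank_eigenspace_eq_one hl
    (hcy.trans (algebraMap_smul E l y).symm)
  refine ⟨v, w, ?_, ?_, Algebra.adjoin_le (by simpa using hc) hyc⟩
  · rintro rfl
    exact hy0 (zero_vecMulVec w)
  · rintro rfl
    exact hy0 (vecMulVec_zero v)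

end RankOne

section Splitting

variable {K E n : Type*} [Field K] [Field E]

theorem vecMulVec_left_injective {w : n → E} (hw : w ≠ 0) :
    Function.Injective fun x : n → E => vecMulVec x w := by
  obtain ⟨j, hj⟩ := Function.ne_iff.1 hw
  exact fun x y hxy => funext fun i => mul_right_cancel₀ hj (congrFun (congrFun hxy i) j)

variable [Algebra K E] [Fintype n]

/-- The cyclic `A`-submodule `A v` of `Eⁿ`, as a vector space over the ground field `K` of `A`. -/
def cyclicSubmodule [DecidableEq n] (A : Subalgebra K (Matrix n n E)) (v : n → E) :
    Submodule K (n → E) :=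
  (Subalgebra.toSubmodule A).map (((Matrix.mulVecBilin E E).flip v).restrictScalars K)

theorem mulVec_surjective_of_ne_zero {v : n → E} (hv : v ≠ 0) :
    Function.Surjective fun x : Matrix n n E => x *ᵥ v := by
  classical
  obtain ⟨j, hj⟩ := Function.ne_iff.1 hv
  refine fun x => ⟨vecMulVec x (Pi.single j (v j)⁻¹), ?_⟩
  have hj' : v j ≠ 0 := hj
  simp [vecMulVec_mulVec, hj']

variable [DecidableEq n]

theorem exists_algHom_map_eq_toMatrix (b : Basis n E (n → E)) {A : Subalgebra K (Matrix n n E)}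
    (hb : ∀ a ∈ A, ∀ j, a *ᵥ b j ∈ Submodule.span K (Set.range b)) :
    ∃ φ : A →ₐ[K] Matrix n n K,
      ∀ a : A, (φ a).map (algebraMap K E) = LinearMap.toMatrix b b (Matrix.toLin' a) := by
  let ι : Matrix n n K →ₐ[K] Matrix n n E := (Algebra.ofId K E).mapMatrix
  have hι : Function.Injective ι := Matrix.map_injective (algebraMap K E).injective
  let conj : Matrix n n E →ₐ[K] Matrix n n E :=
    ((Matrix.toLinAlgEquiv'.trans (LinearMap.toMatrixAlgEquiv b)).restrictScalars K).toAlgHom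
  have hmem : ∀ a : A, (conj.comp A.val) a ∈ ι.range := fun a => by
    have hentry : ∀ i j, ∃ t : K, algebraMap K E t = b.repr ((a : Matrix n n E) *ᵥ b j) i :=
      fun i j => (b.mem_span_iff_repr_mem K _).1 (hb a a.2 j) i
    choose m hm using hentry
    exact ⟨Matrix.of m, Matrix.ext fun i j => (hm i j).trans <| by
      simp [conj, LinearMap.toMatrixAlgEquiv_apply]⟩
  refine ⟨(AlgEquiv.ofInjective ι hι).symm.toAlgHom.comp ((conj.comp A.val).codRestrict _ hmem),
    fun a => ?_⟩
  exact congrArg Subtype.val ((AlgEquiv.ofInjective ι hι).apply_symm_apply ⟨_, hmem a⟩)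

namespace IsMatrixForm

variable {A : Subalgebra K (Matrix n n E)}

theorem span_cyclicSubmodule (hA : IsMatrixForm A) {v : n → E} (hv : v ≠ 0) :
    Submodule.span E (cyclicSubmodule A v : Set (n → E)) = ⊤ := by
  have h := congrArg (Submodule.map ((Matrix.mulVecBilin E E).flip v)) hA.span_eq_top
  rw [Submodule.map_span, Submodule.map_top] at h
  exact h.trans (LinearMap.range_eq_top.2 (mulVec_surjective_of_ne_zero hv))

theorem linearIndependent_of_mem_cyclicSubmodule (hA : IsMatrixForm A) {v w : n → E} (hw : w ≠ 0)
    (hvw : vecMulVec v w ∈ A) {ι : Type*} {x : ι → n → E} (hx : ∀ i, x i ∈ cyclicSubmodule A v)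
    (hlin : LinearIndependent K x) : LinearIndependent E x := by
  let f : (n → E) →ₗ[E] Matrix n n E := (vecMulVecBilin E E).flip w
  have hf : Function.Injective f := vecMulVec_left_injective hw
  have hmem : ∀ i, f (x i) ∈ A := fun i => by
    obtain ⟨a, ha, hax⟩ := hx i
    rw [← hax]
    have hav : vecMulVec (a *ᵥ v) w ∈ A := mul_vecMulVec a v w ▸ A.mul_mem ha hvw
    exact hav
  exact (hA.linearIndependent hmem
    (hlin.map' (f.restrictScalars K) (LinearMap.ker_eq_bot.2 hf))).of_comp f

theorem exists_basis_span_eq_cyclicSubmodule (hA : IsMatrixForm A) {v w : n → E} (hv : v ≠ 0)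
    (hw : w ≠ 0) (hvw : vecMulVec v w ∈ A) :
    ∃ b : Basis n E (n → E), Submodule.span K (Set.range b) = cyclicSubmodule A v := by
  let c := Basis.ofVectorSpace K (cyclicSubmodule A v)
  have hspan : Submodule.span K (Set.range fun i => (c i : n → E)) = cyclicSubmodule A v := by
    rw [Set.range_comp' (f := c), ← Submodule.coe_subtype, ← Submodule.map_span, c.span_eq,
      Submodule.map_top, Submodule.range_subtype]
  have hlin : LinearIndependent E fun i => (c i : n → E) :=
    hA.linearIndependent_of_mem_cyclicSubmodule hw hvw (fun i => (c i).2)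
      (c.linearIndependent.map' (Submodule.subtype _) (Submodule.ker_subtype _))
  have htop : ⊤ ≤ Submodule.span E (Set.range fun i => (c i : n → E)) := by
    rw [← Submodule.span_span_of_tower K E, hspan]
    exact (hA.span_cyclicSubmodule hv).ge
  let b := Basis.mk hlin htop
  refine ⟨b.reindex (b.indexEquiv (Pi.basisFun E n)), ?_⟩
  rw [Basis.range_reindex, Basis.coe_mk, hspan]

theorem exists_algHom_matrix (hA : IsMatrixForm A) {v w : n → E} (hv : v ≠ 0)
    (hw : w ≠ 0) (hvw : vecMulVec v w ∈ A) :
    ∃ φ : A →ₐ[K] Matrix n n K, ∀ a : A, algebraMap K E (φ a).trace = (a : Matrix n n E).trace := by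
  obtain ⟨b, hb⟩ := hA.exists_basis_span_eq_cyclicSubmodule hv hw hvw
  have hstable : ∀ a ∈ A, ∀ j, a *ᵥ b j ∈ Submodule.span K (Set.range b) := fun a ha j => by
    obtain ⟨x, hx, hxv⟩ : b j ∈ cyclicSubmodule A v := hb ▸ Submodule.subset_span ⟨j, rfl⟩
    rw [hb, ← hxv]
    exact ⟨a * x, A.mul_mem ha hx, (Matrix.mulVec_mulVec v a x).symm⟩
  obtain ⟨φ, hφ⟩ := exists_algHom_map_eq_toMatrix b hstable
  refine ⟨φ, fun a => ?_⟩
  rw [AddMonoidHom.map_trace (algebraMap K E), hφ, ← LinearMap.trace_eq_matrix_trace,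
    Matrix.trace_toLin'_eq]

end IsMatrixForm

end Splitting

section MinimalSplittingField

open IntermediateField

variable {K n : Type*} [Field K] [Fintype n] [DecidableEq n]

namespace IsMatrixForm

theorem exists_algHom_matrix_adjoin_simple {E : Type*} [Field E] [Algebra K E]
    {A : Subalgebra K (Matrix n n E)} (hA : IsMatrixForm A) {c : Matrix n n E} (hc : c ∈ A) {l : E}
    (hl : finrank E (Module.End.eigenspace (Matrix.toLin' c) l) = 1) :
    ∃ φ : A →ₐ[K] Matrix n n K⟮l⟯,
      ∀ a : A, algebraMap K⟮l⟯ E (φ a).trace = (a : Matrix n n E).trace := by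
  let B := Algebra.adjoin K⟮l⟯ (A : Set (Matrix n n E))
  have hB : IsMatrixForm B := hA.adjoin K⟮l⟯
  obtain ⟨v, w, hv, hw, hvw⟩ := hB.exists_vecMulVec_mem (Algebra.subset_adjoin hc)
    (l := AdjoinSimple.gen K l) hl
  obtain ⟨φ, hφ⟩ := hB.exists_algHom_matrix hv hw hvw
  let i : A →ₐ[K] B.restrictScalars K := Subalgebra.inclusion Algebra.subset_adjoin
  exact ⟨(φ.restrictScalars K).comp i, fun a => hφ (i a)⟩

theorem exists_ne_zero_rank_le_finrank {E : Type*} [Field E] [Algebra K E] [Nonempty n]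
    {A : Subalgebra K (Matrix n n E)} (hA : IsMatrixForm A) {L : Type*} [Field L] [Algebra K L]
    [FiniteDimensional K L] {ψ : A →ₐ[K] Matrix n n L} (hψ : Function.Injective ψ) :
    ∃ b ∈ A, b ≠ 0 ∧ b.rank ≤ finrank K L := by
  let act : Matrix n n L →ₐ[K] Module.End K (n → L) :=
    (Algebra.lsmul K K (n → L)).comp (Matrix.toLinAlgEquiv'.restrictScalars K).toAlgHom
  have hact : Function.Injective act := fun _ _ h =>
    Matrix.mulVec_injective (congrArg DFunLike.coe h)
  obtain ⟨b, hb, hb0, hle⟩ := hA.exists_card_mul_rank_le_finrank (ψ := act.comp ψ)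
    (hact.comp hψ)
  refine ⟨b, hb, hb0, Nat.le_of_mul_le_mul_left ?_ (Fintype.card_pos (α := n))⟩
  rwa [Module.finrank_pi_fintype, Finset.sum_const, Finset.card_univ, smul_eq_mul] at hle

variable [Algebra K ℝ] {A : Subalgebra K (Matrix n n ℝ)}

theorem exists_intermediateField_finrank_le_rank (hA : IsMatrixForm A) {b : Matrix n n ℝ}
    (hb : b ∈ A) (hb0 : b ≠ 0) :
    ∃ F : IntermediateField K ℝ, FiniteDimensional K F ∧ finrank K F ≤ b.rank ∧
      ∃ φ : A →ₐ[K] Matrix n n F,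
        ∀ a : A, algebraMap F ℝ (φ a).trace = (a : Matrix n n ℝ).trace := by
  obtain ⟨a, ha, l, hl, hfin⟩ := exists_mem_finrank_eigenspace_mul_eq_one hA.dense hb0
  have hba : b * a ∈ A := A.mul_mem hb ha
  obtain ⟨⟨z, hz⟩, hz0, -⟩ := finrank_eq_one_iff'.1 hfin
  obtain ⟨hint, hdeg⟩ := hA.isIntegral_and_natDegree_minpoly_le_rank hba hl
    (by simpa using hz0) (Module.End.mem_eigenspace_iff.1 hz)
  refine ⟨K⟮l⟯, adjoin.finiteDimensional hint, ?_, hA.exists_algHom_matrix_adjoin_simple hba hfin⟩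
  rw [adjoin.finrank hint]
  exact hdeg.trans (Matrix.rank_mul_le_left b a)

theorem exists_intermediateField_finrank_le (hA : IsMatrixForm A) :
    ∃ F : IntermediateField K ℝ, FiniteDimensional K F ∧
      (∃ φ : A →ₐ[K] Matrix n n F,
        ∀ a : A, algebraMap F ℝ (φ a).trace = (a : Matrix n n ℝ).trace) ∧
      ∀ (L : Type*) [Field L] [Algebra K L] [FiniteDimensional K L] (ψ : A →ₐ[K] Matrix n n L),
        Function.Injective ψ → finrank K F ≤ finrank K L := by
  classical
  cases isEmpty_or_nonempty n with
  | inl _ =>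
    exact ⟨⊥, inferInstance, ⟨.ofLinearMap 0 (Subsingleton.elim _ _) (fun _ _ =>
      Subsingleton.elim _ _), fun a => by simp [Matrix.trace_eq_zero_of_isEmpty]⟩,
      fun L _ _ _ _ _ => IntermediateField.finrank_bot.trans_le finrank_pos⟩
  | inr _ =>
    have hrank : ∃ r, ∃ b ∈ A, b ≠ 0 ∧ b.rank = r := ⟨_, 1, one_mem A, one_ne_zero, rfl⟩
    obtain ⟨b, hb, hb0, hbr⟩ := Nat.find_spec hrank
    obtain ⟨F, hF, hFb, hφ⟩ := hA.exists_intermediateField_finrank_le_rank hb hb0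
    refine ⟨F, hF, hφ, fun L _ _ _ ψ hψ => ?_⟩
    obtain ⟨b', hb', hb0', hL⟩ := hA.exists_ne_zero_rank_le_finrank hψ
    exact (hFb.trans (hbr.trans_le (Nat.find_min' hrank ⟨b', hb', hb0', rfl⟩))).trans hL

end IsMatrixForm

end MinimalSplittingField

section Burnside

variable {k V : Type*} [Field k] [IsAlgClosed k] [AddCommGroup V] [Module k V]
  [FiniteDimensional k V]

theorem subalgebra_eq_top_of_isSimpleModule (B : Subalgebra k (Module.End k V))
    [IsSimpleModule B V] : B = ⊤ := by
  refine eq_top_iff.2 fun f _ => ?_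
  have hbij := IsSimpleModule.algebraMap_end_bijective_of_isAlgClosed (A := B) (V := V) k
  let f' : Module.End (Module.End B V) V :=
    { f with
      map_smul' := fun e v => by
        obtain ⟨t, rfl⟩ := hbij.2 e
        exact f.map_smul t v }
  obtain ⟨s, hs⟩ := Module.Finite.fg_top (R := k) (M := V)
  obtain ⟨b, hb⟩ := jacobson_density f' s
  have hfb : f = b := LinearMap.ext_on hs fun v hv => hb v hv
  exact hfb ▸ b.2

theorem span_range_eq_top_of_irreducible {M : Type*} [Monoid M] {n : Type*} [Fintype n]
    [DecidableEq n] {ρ : M →* Matrix n n k}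
    (hρ : ∀ W : Submodule k (n → k), (∀ g, ∀ v ∈ W, ρ g *ᵥ v ∈ W) → W = ⊥ ∨ W = ⊤) :
    Submodule.span k (Set.range ρ) = ⊤ := by
  cases isEmpty_or_nonempty n with
  | inl _ => exact Subsingleton.elim _ _
  | inr _ =>
    let e : Matrix n n k ≃ₐ[k] Module.End k (n → k) := Matrix.toLinAlgEquiv'
    let B := (Algebra.adjoin k (Set.range ρ)).map e.toAlgHom
    have hsimple : IsSimpleModule B (n → k) := by
      refine isSimpleModule_iff _ _ |>.2 { eq_bot_or_eq_top := fun W => ?_ }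
      refine (hρ (W.restrictScalars k) fun g v hv => W.smul_mem ⟨e (ρ g), ?_⟩ hv).imp
        (Submodule.restrictScalars_eq_bot_iff k _ _).1
        (Submodule.restrictScalars_eq_top_iff k _ _).1
      exact ⟨ρ g, Algebra.subset_adjoin ⟨g, rfl⟩, rfl⟩
    have hB : Algebra.adjoin k (Set.range ρ) = ⊤ :=
      Subalgebra.map_injective (f := e.toAlgHom) e.injective <| by
        rw [Algebra.map_top, (AlgHom.range_eq_top _).2 e.surjective]
        exact subalgebra_eq_top_of_isSimpleModule B
    rw [← MonoidHom.coe_mrange, ← Submonoid.closure_eq (MonoidHom.mrange ρ),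
      ← Algebra.adjoin_eq_span, MonoidHom.coe_mrange, hB, Algebra.top_toSubmodule]

end Burnside

section Character

variable {M K E n : Type*} [Monoid M] [Field K] [Field E] [Fintype n] [DecidableEq n]
  {ρ : M →* Matrix n n E}

theorem span_range_eq_top_of_map_trace {σ : M →* Matrix n n K} (f : K →+* E)
    (hρ : Submodule.span E (Set.range ρ) = ⊤) (hfσ : ∀ g, f (σ g).trace = (ρ g).trace) :
    Submodule.span K (Set.range σ) = ⊤ := by
  obtain ⟨s, hs, hspan, hlin⟩ := exists_linearIndependent E (Set.range ρ)
  have hs' : ∀ i : s, ∃ g, ρ g = i := fun i => hs i.2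
  choose g hg using hs'
  let b : Basis s E (Matrix n n E) := .mk hlin (by simp [hspan, hρ])
  have : Fintype s := FiniteDimensional.fintypeBasisIndex b
  have hσg : LinearIndependent K fun i => σ (g i) := by
    refine Fintype.linearIndependent_iff.2 fun c hc i => f.injective ?_
    have hsum : ∑ j, f (c j) • (j : Matrix n n E) = 0 := by
      refine eq_zero_of_trace_mul_eq_zero hρ ?_
      rintro _ ⟨h, rfl⟩
      have hzero := congrArg (fun z => f (z * σ h).trace) hc
      simpa [Finset.sum_mul, Matrix.trace_sum, ← hg, ← hfσ, ← map_mul] using hzero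
    rw [map_zero]
    exact Fintype.linearIndependent_iff.1 hlin _ hsum i
  have hcard : Fintype.card s = finrank K (Matrix n n K) := by
    rw [← Module.finrank_eq_card_basis b, Module.finrank_matrix, Module.finrank_matrix,
      finrank_self, finrank_self]
  refine top_le_iff.1 ((hσg.span_eq_top_of_card_eq_finrank' hcard).ge.trans ?_)
  exact Submodule.span_mono (Set.range_comp_subset_range g σ)

theorem exists_injective_algHom_range_of_ker_eq {R A B : Type*} [Ring R] [Ring A] [Ring B]
    [Algebra K R] [Algebra K A] [Algebra K B] {f : R →ₐ[K] A} {g : R →ₐ[K] B}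
    (h : RingHom.ker f = RingHom.ker g) : ∃ ψ : f.range →ₐ[K] B, Function.Injective ψ := by
  let e : f.range ≃ₐ[K] R ⧸ RingHom.ker g :=
    (Ideal.quotientKerEquivRange f).symm.trans (Ideal.quotientEquivAlgOfEq K h)
  exact ⟨(Ideal.kerLiftAlg g).comp e.toAlgHom, (Ideal.kerLiftAlg_injective g).comp e.injective⟩

variable [Algebra K E]

theorem trace_lift {t : M → K} (ht : ∀ g, (ρ g).trace = algebraMap K E (t g))
    (x : MonoidAlgebra K M) :
    (MonoidAlgebra.lift K _ M ρ x).trace =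
      algebraMap K E (x.coeff.sum fun g r => r * t g) := by
  simp only [MonoidAlgebra.lift_apply, Finsupp.sum, Matrix.trace_sum, Matrix.trace_smul, ht,
    map_sum, map_mul]
  simp only [Algebra.smul_def]

theorem isMatrixForm_range_lift (hρ : Submodule.span E (Set.range ρ) = ⊤)
    {t : M → K} (ht : ∀ g, (ρ g).trace = algebraMap K E (t g)) :
    IsMatrixForm (MonoidAlgebra.lift K _ M ρ).range where
  span_eq_top := top_le_iff.1 <| hρ ▸ Submodule.span_mono
    (Set.range_subset_iff.2 fun g => ⟨MonoidAlgebra.of K M g, MonoidAlgebra.lift_of ρ g⟩)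
  trace_mem := by
    rintro _ ⟨x, rfl⟩
    exact ⟨_, (trace_lift ht x).symm⟩

theorem lift_eq_zero_iff (hρ : Submodule.span E (Set.range ρ) = ⊤)
    {t : M → K} (ht : ∀ g, (ρ g).trace = algebraMap K E (t g)) (x : MonoidAlgebra K M) :
    MonoidAlgebra.lift K _ M ρ x = 0 ↔
      ∀ y : MonoidAlgebra K M, (x * y).coeff.sum (fun g r => r * t g) = 0 := by
  simp only [← map_eq_zero (algebraMap K E), ← trace_lift ht, map_mul]
  refine ⟨fun h y => by rw [h, zero_mul, trace_zero], fun h => ?_⟩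
  refine eq_zero_of_trace_mul_eq_zero hρ ?_
  rintro _ ⟨g, rfl⟩
  exact MonoidAlgebra.lift_of (R := K) ρ g ▸ h (.of K M g)

theorem exists_injective_algHom_of_trace_eq {L m : Type*} [Field L] [Algebra K L] [Fintype m]
    [DecidableEq m] {σ : M →* Matrix m m L} (hρ : Submodule.span E (Set.range ρ) = ⊤)
    (hσ : Submodule.span L (Set.range σ) = ⊤) {t : M → K}
    (htρ : ∀ g, (ρ g).trace = algebraMap K E (t g))
    (htσ : ∀ g, (σ g).trace = algebraMap K L (t g)) :
    ∃ ψ : (MonoidAlgebra.lift K _ M ρ).range →ₐ[K] Matrix m m L, Function.Injective ψ := by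
  refine exists_injective_algHom_range_of_ker_eq (g := MonoidAlgebra.lift K _ M σ)
    (Ideal.ext fun x => ?_)
  exact (lift_eq_zero_iff hρ htρ x).trans (lift_eq_zero_iff hσ htσ x).symm

end Character

section RealFields

theorem exists_intermediateField_monoidHom_finrank_le {M K n : Type*} [Monoid M] [Field K]
    [Algebra K ℝ] [Fintype n] [DecidableEq n] {ρ : M →* Matrix n n ℝ}
    (hρ : Submodule.span ℝ (Set.range ρ) = ⊤) {t : M → K}
    (ht : ∀ g, (ρ g).trace = algebraMap K ℝ (t g)) :
    ∃ F : IntermediateField K ℝ, FiniteDimensional K F ∧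
      (∃ σ : M →* Matrix n n F, ∀ g, algebraMap F ℝ (σ g).trace = (ρ g).trace) ∧
      ∀ (L : Type*) [Field L] [Algebra K L] [FiniteDimensional K L] (σ : M →* Matrix n n L),
        Submodule.span L (Set.range σ) = ⊤ → (∀ g, (σ g).trace = algebraMap K L (t g)) →
        finrank K F ≤ finrank K L := by
  obtain ⟨F, hF, ⟨φ, hφ⟩, hmin⟩ :=
    (isMatrixForm_range_lift hρ ht).exists_intermediateField_finrank_le
  let lift := (MonoidAlgebra.lift K _ M ρ).rangeRestrict
  refine ⟨F, hF, ⟨((φ.comp lift : _ →* _)).comp (MonoidAlgebra.of K M), fun g => ?_⟩,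
    fun L _ _ _ σ hσ htσ => ?_⟩
  · exact (hφ _).trans (congrArg Matrix.trace (MonoidAlgebra.lift_of ρ g))
  · obtain ⟨ψ, hψ⟩ := exists_injective_algHom_of_trace_eq hρ hσ ht htσ
    exact hmin L ψ hψ

theorem finrank_restrictScalars_le {k E Ω : Type*} [Field k] [Field E] [Field Ω] [Algebra k E]
    [Algebra k Ω] {K : IntermediateField k E} {F : IntermediateField K E} {i : E →ₐ[k] Ω}
    {F' : IntermediateField k Ω} [FiniteDimensional k F'] (hK : K.map i ≤ F')
    (hF : ∀ [Algebra K F'] [FiniteDimensional K F'],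
      (∀ x : K, (algebraMap K F' x : Ω) = i x) → finrank K F ≤ finrank K F') :
    finrank k (F.restrictScalars k) ≤ finrank k F' := by
  let j : K →ₐ[k] F' := (IntermediateField.inclusion hK).comp (K.equivMap i).toAlgHom
  let _ : Algebra K F' := j.toAlgebra
  have : IsScalarTower k K F' := .of_algebraMap_eq' j.comp_algebraMap.symm
  have : FiniteDimensional K F' := .right k K F'
  calc finrank k (F.restrictScalars k)
      = finrank k K * finrank K F := (Module.finrank_mul_finrank k K F).symm
    _ ≤ finrank k K * finrank K F' := Nat.mul_le_mul_left _ (hF fun _ => rfl)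
    _ = finrank k F' := Module.finrank_mul_finrank k K F'

theorem exists_intermediateField_adjoin_trace_le {k Ω M n : Type*} [Field k] [Algebra k ℝ]
    [Field Ω] [Algebra k Ω] [Monoid M] [Fintype n] [DecidableEq n] {ρ : M →* Matrix n n ℝ}
    {ρ₀ : M →* Matrix n n Ω} (i : ℝ →ₐ[k] Ω) (hρ₀ : Submodule.span Ω (Set.range ρ₀) = ⊤)
    (hi : ∀ g, i (ρ g).trace = (ρ₀ g).trace)
    [FiniteDimensional k (IntermediateField.adjoin k (Set.range fun g => (ρ g).trace))] :
    ∃ F : IntermediateField k ℝ,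
      IntermediateField.adjoin k (Set.range fun g => (ρ g).trace) ≤ F ∧ FiniteDimensional k F ∧
      (∃ σ : M →* Matrix n n F, ∀ g, algebraMap F ℝ (σ g).trace = (ρ g).trace) ∧
      ∀ F' : IntermediateField k Ω,
        (IntermediateField.adjoin k (Set.range fun g => (ρ g).trace)).map i ≤ F' →
        FiniteDimensional k F' → ∀ σ' : M →* Matrix n n F',
        (∀ g, algebraMap F' Ω (σ' g).trace = (ρ₀ g).trace) → finrank k F ≤ finrank k F' := by
  set K := IntermediateField.adjoin k (Set.range fun g => (ρ g).trace)
  let t : M → K := fun g => ⟨(ρ g).trace, IntermediateField.subset_adjoin _ _ ⟨g, rfl⟩⟩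
  obtain ⟨F, hF, hσ, hmin⟩ := exists_intermediateField_monoidHom_finrank_le
    (span_range_eq_top_of_map_trace i.toRingHom hρ₀ hi) (t := t) fun _ => rfl
  refine ⟨F.restrictScalars k, fun x hx => F.algebraMap_mem ⟨x, hx⟩,
    FiniteDimensional.trans k K F, hσ, fun F' hKF' _ σ' hσ' =>
      finrank_restrictScalars_le hKF' fun halg => hmin F' σ' ?_ fun g => Subtype.ext ?_⟩
  · exact span_range_eq_top_of_map_trace (algebraMap F' Ω) hρ₀ hσ'
  · exact ((hσ' g).trans (hi g).symm).trans (halg (t g)).symm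

theorem Affords.map_ofReal {G : Type*} [Group G] {F : IntermediateField ℚ ℝ} {d : ℕ}
    {χ : G → ℂ} (σ : G →* Matrix (Fin d) (Fin d) F) (hσ : ∀ g, (((σ g).trace : ℝ) : ℂ) = χ g) :
    Affords (F.map (Complex.ofRealAm.restrictScalars ℚ)) χ := by
  let e := (F.equivMap (Complex.ofRealAm.restrictScalars ℚ)).toAlgHom
  refine ⟨d, (MonoidHomClass.toMonoidHom e.mapMatrix).comp σ, fun g => ?_⟩
  rw [← hσ]
  exact congrArg Subtype.val (AddMonoidHom.map_trace e (σ g)).symm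

theorem isIntegral_trace_of_pow_eq_one {k Ω n : Type*} [Field k] [Field Ω] [IsAlgClosed Ω]
    [Algebra k Ω] [Fintype n] [DecidableEq n] {c : Matrix n n Ω} {N : ℕ} (hN : N ≠ 0)
    (hc : c ^ N = 1) : IsIntegral k c.trace := by
  rw [Matrix.trace_eq_sum_roots_charpoly]
  refine IsIntegral.multiset_sum fun l hl => ?_
  have hev : Module.End.HasEigenvalue (Matrix.toLin' c) l := by
    rw [Module.End.hasEigenvalue_iff_isRoot_charpoly, Matrix.charpoly_toLin']
    exact Polynomial.isRoot_of_mem_roots hl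
  obtain ⟨z, hz, hz0⟩ := hev.exists_hasEigenvector
  have h := aeval_mulVec_of_mulVec_eq_smul (Module.End.mem_eigenspace_iff.1 hz)
    (Polynomial.X ^ N - 1 : Polynomial k)
  refine ⟨Polynomial.X ^ N - 1, Polynomial.monic_X_pow_sub_C 1 hN, ?_⟩
  simp only [map_sub, map_pow, map_one, Polynomial.aeval_X, hc, sub_self, Matrix.zero_mulVec,
    Polynomial.eval₂_X, Polynomial.eval₂_sub, Polynomial.eval₂_pow, Polynomial.eval₂_one] at h ⊢
  exact (smul_eq_zero.1 h.symm).resolve_right hz0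

end RealFields

theorem finiteDimensional_adjoin_of_trace_eq {G : Type*} [Group G] [Finite G] {χ : G → ℂ}
    {n : Type*} [Fintype n] [DecidableEq n] {ρ : G →* Matrix n n ℂ}
    (hρ : ∀ g, (ρ g).trace = χ g) :
    FiniteDimensional ℚ (IntermediateField.adjoin ℚ (Set.range χ)) := by
  refine IntermediateField.finiteDimensional_adjoin ?_
  rintro _ ⟨g, rfl⟩
  rw [← hρ]
  refine isIntegral_trace_of_pow_eq_one (N := Nat.card G) Nat.card_pos.ne' ?_
  rw [← map_pow, pow_card_eq_one', map_one]

theorem dim_eq_of_map_trace_eq {M L E : Type*} [Monoid M] [Field L] [Field E] [CharZero E]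
    {m d : ℕ} {σ : M →* Matrix (Fin m) (Fin m) L} {ρ : M →* Matrix (Fin d) (Fin d) E}
    (f : L →+* E) (h : ∀ g, f (σ g).trace = (ρ g).trace) : m = d := by
  simpa using h 1

theorem exists_real_minimal_splitting_field_general
    {G : Type*} [Group G] (χ : G → ℂ)
    [FiniteDimensional ℚ (IntermediateField.adjoin ℚ (Set.range χ))]
    (hχirr : ∃ (d : ℕ) (ρ : G →* Matrix (Fin d) (Fin d) ℂ),
      (∀ g : G, (ρ g).trace = χ g) ∧
      (∀ W : Submodule ℂ (Fin d → ℂ),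
        (∀ g : G, ∀ v ∈ W, (ρ g).mulVec v ∈ W) → W = ⊥ ∨ W = ⊤))
    (hreal : ∃ (d : ℕ) (ρ : G →* Matrix (Fin d) (Fin d) ℝ),
      ∀ g : G, ((ρ g).trace : ℂ) = χ g) :
    ∃ F : IntermediateField ℚ ℂ,
      IntermediateField.adjoin ℚ (Set.range χ) ≤ F ∧
      (∀ x : F, ∃ r : ℝ, (x : ℂ) = (r : ℂ)) ∧
      FiniteDimensional ℚ F ∧
      Affords F χ ∧
      (∀ F' : IntermediateField ℚ ℂ,
        IntermediateField.adjoin ℚ (Set.range χ) ≤ F' → FiniteDimensional ℚ F' →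
        Affords F' χ → finrank ℚ F ≤ finrank ℚ F') := by
  obtain ⟨d, ρ₀, hρ₀, hirr⟩ := hχirr
  obtain ⟨_, ρ, hρ⟩ := hreal
  obtain rfl : χ = fun g => ((ρ g).trace : ℂ) := (funext hρ).symm
  obtain rfl := dim_eq_of_map_trace_eq Complex.ofRealHom fun g => (hρ₀ g).symm
  let ι : ℝ →ₐ[ℚ] ℂ := Complex.ofRealAm.restrictScalars ℚ
  let K := IntermediateField.adjoin ℚ (Set.range fun g => (ρ g).trace)
  have hK : IntermediateField.adjoin ℚ (Set.range fun g => ((ρ g).trace : ℂ)) = K.map ι := by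
    rw [IntermediateField.adjoin_map, ← Set.range_comp']
    rfl
  have : FiniteDimensional ℚ (K.map ι) := hK ▸ ‹_›
  have : FiniteDimensional ℚ K := .equiv (K.equivMap ι).symm.toLinearEquiv
  obtain ⟨F, hKF, hF, ⟨σ, hσ⟩, hmin⟩ := exists_intermediateField_adjoin_trace_le ι
    (span_range_eq_top_of_irreducible hirr) fun g => (hρ₀ g).symm
  refine ⟨F.map ι, hK.trans_le (IntermediateField.map_mono ι hKF), ?_,
    .equiv (F.equivMap ι).toLinearEquiv, Affords.map_ofReal σ fun g => congrArg _ (hσ g), ?_⟩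
  · rintro ⟨_, r, -, rfl⟩
    exact ⟨r, rfl⟩
  · rintro F' hF' hfin ⟨m, σ', hσ'⟩
    have htrace g : algebraMap F' ℂ (σ' g).trace = (ρ₀ g).trace := (hσ' g).trans (hρ₀ g).symm
    obtain rfl := dim_eq_of_map_trace_eq (algebraMap F' ℂ) htrace
    rw [← (F.equivMap ι).toLinearEquiv.finrank_eq]
    exact hmin F' (hK.ge.trans hF') hfin σ' htrace

/-- An irreducible complex character afforded by a real representation admits a real
minimal splitting field: a subfield `F` of `ℝ` containing `ℚ(χ)` affording `χ`, of
minimal degree among all finite extensions affording `χ`. -/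
theorem exists_real_minimal_splitting_field
    {G : Type*} [Group G] [Fintype G] (χ : G → ℂ)
    -- `χ` is an irreducible complex character
    (hχirr : ∃ (d : ℕ) (ρ : G →* Matrix (Fin d) (Fin d) ℂ),
      (∀ g : G, (ρ g).trace = χ g) ∧
      (∀ W : Submodule ℂ (Fin d → ℂ),
        (∀ g : G, ∀ v ∈ W, (ρ g).mulVec v ∈ W) → W = ⊥ ∨ W = ⊤))
    -- `χ` is afforded by a real representation
    (hreal : ∃ (d : ℕ) (ρ : G →* Matrix (Fin d) (Fin d) ℝ),
      ∀ g : G, ((ρ g).trace : ℂ) = χ g) :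
    ∃ F : IntermediateField ℚ ℂ,
      IntermediateField.adjoin ℚ (Set.range χ) ≤ F ∧
      (∀ x : F, ∃ r : ℝ, (x : ℂ) = (r : ℂ)) ∧
      FiniteDimensional ℚ F ∧
      Affords F χ ∧
      (∀ F' : IntermediateField ℚ ℂ,
        IntermediateField.adjoin ℚ (Set.range χ) ≤ F' → FiniteDimensional ℚ F' →
        Affords F' χ → finrank ℚ F ≤ finrank ℚ F') := by
  have := finiteDimensional_adjoin_of_trace_eq hχirr.choose_spec.choose_spec.1
  exact exists_real_minimal_splitting_field_general χ hχirr hreal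
end

section
/- Let K be a number field of degree n which is not totally imaginary (i.e., K has at least one real embedding). Then for every positive integer c ≤ n − 1 there exists a c-hyperbolic unit μ ∈ U_K. -/
open NumberField Module

/-- A unit `μ` of the ring of integers of a number field `K` is `c`-hyperbolic if no
product of `k` (not necessarily distinct) values of embeddings `K → ℂ` at `μ`, for
`1 ≤ k ≤ c`, has absolute value `1`. -/
def IsCHyperbolicUnit (K : Type*) [Field K] [NumberField K] (c : ℕ) (μ : (𝓞 K)ˣ) : Prop :=
  ∀ k : ℕ, 1 ≤ k → k ≤ c → ∀ σs : Fin k → (K →+* ℂ),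
    ‖∏ i, σs i ((μ : 𝓞 K) : K)‖ ≠ 1

/-!
For a finite family `σ` of complex embeddings, `u ↦ ‖∏ i, σ i u‖` is a homomorphism from the units
to the torsion-free monoid `ℝ≥0`. By B. H. Neumann's lemma a group is not a finite union of kernels
of nontrivial homomorphisms of this kind, so it is enough to treat one family at a time.

If `σ` has `m w` members above each infinite place `w` and its homomorphism is trivial, then
`∑ w, m w * log (w u) = 0` for all units `u`. By Dirichlet's unit theorem the product formula is the
only such linear relation up to scaling, so `m` is proportional to the local degrees. Comparing with
a real place `v` shows that the number `∑ w, m w` of embeddings is `m v` times the degree of `K`,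
and no number strictly between `0` and the degree is of this form.
-/

open scoped NNReal Pointwise

theorem exists_forall_map_ne_one {G M ι : Type*} [Group G] [Monoid M] [IsMulTorsionFree M]
    [Finite ι] (f : ι → G →* M) (hf : ∀ i, f i ≠ 1) : ∃ g, ∀ i, f i g ≠ 1 := by
  by_contra! hcover
  cases nonempty_fintype ι
  have hunion : ⋃ i ∈ Finset.univ, (1 : G) • ((f i).ker : Set G) = Set.univ := by
    simpa [Set.eq_univ_iff_forall, MonoidHom.mem_ker] using hcover
  obtain ⟨i, -, hfinite⟩ := Subgroup.exists_finiteIndex_of_leftCoset_cover hunion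
  refine hf i (MonoidHom.ext fun g ↦ ?_)
  obtain ⟨n, hn, -, hpow⟩ := Subgroup.exists_pow_mem_of_index_ne_zero hfinite.index_ne_zero g
  rw [MonoidHom.mem_ker, map_pow] at hpow
  exact (pow_eq_one_iff_left hn.ne').1 hpow

theorem isReal_mk_ofRealHom_comp {K : Type*} [Field K] (φ : K →+* ℝ) :
    (InfinitePlace.mk (Complex.ofRealHom.comp φ)).IsReal :=
  InfinitePlace.isReal_mk_iff.2 (RingHom.ext fun x ↦ Complex.conj_ofReal (φ x))

section Family

variable {K ι : Type*} [Field K] [Fintype ι]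

/-- The homomorphism `u ↦ ‖∏ i, σ i u‖` on units attached to a finite family `σ` of complex
embeddings. It takes values in `ℝ≥0` because that monoid, unlike `ℝ`, is torsion-free. -/
noncomputable def normProdHom (σ : ι → K →+* ℂ) : (𝓞 K)ˣ →* ℝ≥0 where
  toFun u := ‖∏ i, σ i (u : K)‖₊
  map_one' := by simp
  map_mul' u v := by simp [Finset.prod_mul_distrib]

theorem normProdHom_eq_one_iff {σ : ι → K →+* ℂ} {u : (𝓞 K)ˣ} :
    normProdHom σ u = 1 ↔ ‖∏ i, σ i (u : K)‖ = 1 :=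
  NNReal.coe_eq_one.symm

open scoped Classical in
/-- The number of members of a finite family `σ` of complex embeddings, counted with repetition,
that induce the infinite place `w`. -/
noncomputable def placeMultiplicity (σ : ι → K →+* ℂ) (w : InfinitePlace K) : ℕ :=
  Fintype.card {i // InfinitePlace.mk (σ i) = w}

variable [NumberField K]

theorem sum_placeMultiplicity (σ : ι → K →+* ℂ) :
    ∑ w, placeMultiplicity σ w = Fintype.card ι := by
  classical
  rw [← Fintype.card_congr (Equiv.sigmaFiberEquiv fun i ↦ InfinitePlace.mk (σ i)),
    Fintype.card_sigma]
  rfl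

theorem norm_prod_eq_prod_pow_placeMultiplicity (σ : ι → K →+* ℂ) (x : K) :
    ‖∏ i, σ i x‖ = ∏ w : InfinitePlace K, w x ^ placeMultiplicity σ w := by
  classical
  simp only [placeMultiplicity, Fintype.card_subtype, ← Finset.prod_const]
  rw [Finset.prod_fiberwise' Finset.univ (fun i ↦ InfinitePlace.mk (σ i)) (fun w ↦ w x), norm_prod]
  rfl

end Family

section NumberField

variable {K : Type*} [Field K] [NumberField K]

theorem exists_eq_mul_mult_of_forall_sum_mul_log_eq_zero {a : InfinitePlace K → ℝ}
    (ha : ∀ u : (𝓞 K)ˣ, ∑ w, a w * Real.log (w (u : K)) = 0) :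
    ∃ t : ℝ, ∀ w, a w = t * w.mult := by
  obtain ⟨w₁, hmin⟩ := Finite.exists_min fun w : InfinitePlace K ↦ a w / w.mult
  have hmult (w : InfinitePlace K) : (0 : ℝ) < w.mult := Nat.cast_pos.2 InfinitePlace.mult_pos
  set t := a w₁ / w₁.mult with ht
  have hle (w) : 0 ≤ a w - t * w.mult := sub_nonneg.2 ((le_div_iff₀ (hmult w)).1 (hmin w))
  have heq : a w₁ - t * w₁.mult = 0 := by rw [ht, div_mul_cancel₀ _ (hmult w₁).ne', sub_self]
  -- A unit that is small at every place but the minimizing one gives all terms the same sign.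
  obtain ⟨u, hu⟩ := Units.dirichletUnitTheorem.exists_unit K w₁
  have hsum : ∑ w, (a w - t * w.mult) * Real.log (w (u : K)) = 0 := by
    simp only [sub_mul, mul_assoc, Finset.sum_sub_distrib, ← Finset.mul_sum, ha,
      Units.sum_mult_mul_log, mul_zero, sub_zero]
  have hnonpos (w) : (a w - t * w.mult) * Real.log (w (u : K)) ≤ 0 := by
    obtain rfl | hw := eq_or_ne w w₁
    · rw [heq, zero_mul]
    · exact mul_nonpos_of_nonneg_of_nonpos (hle w) (hu w hw).le
  refine ⟨t, fun w ↦ sub_eq_zero.1 ?_⟩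
  obtain rfl | hw := eq_or_ne w w₁
  · exact heq
  · have hzero : (a w - t * w.mult) * Real.log (w (u : K)) = 0 :=
      (Finset.sum_eq_zero_iff_of_nonpos fun w _ ↦ hnonpos w).1 hsum w (Finset.mem_univ w)
    exact (mul_eq_zero.1 hzero).resolve_right (hu w hw).ne

variable {ι : Type*} [Fintype ι] {σ : ι → K →+* ℂ}

theorem exists_placeMultiplicity_eq_mul_mult (hσ : ∀ u : (𝓞 K)ˣ, ‖∏ i, σ i (u : K)‖ = 1) :
    ∃ t : ℝ, ∀ w, (placeMultiplicity σ w : ℝ) = t * w.mult := by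
  refine exists_eq_mul_mult_of_forall_sum_mul_log_eq_zero fun u ↦ ?_
  have hlog := congrArg Real.log (hσ u)
  rw [norm_prod_eq_prod_pow_placeMultiplicity, Real.log_one,
    Real.log_prod fun w _ ↦ pow_ne_zero _ (Units.pos_at_place u w).ne'] at hlog
  simpa only [Real.log_pow] using hlog

theorem mult_mul_card_eq_placeMultiplicity_mul_finrank
    (hσ : ∀ u : (𝓞 K)ˣ, ‖∏ i, σ i (u : K)‖ = 1) (v : InfinitePlace K) :
    v.mult * Fintype.card ι = placeMultiplicity σ v * finrank ℚ K := by
  obtain ⟨t, ht⟩ := exists_placeMultiplicity_eq_mul_mult hσ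
  rw [← sum_placeMultiplicity σ, ← InfinitePlace.sum_mult_eq, Finset.mul_sum, Finset.mul_sum]
  refine Finset.sum_congr rfl fun w _ ↦ Nat.cast_injective (R := ℝ) ?_
  push_cast
  rw [ht v, ht w]
  ring

theorem exists_unit_forall_norm_prod_ne_one {α : Type*} [Finite α] {κ : α → Type*}
    [∀ a, Fintype (κ a)] (σ : ∀ a, κ a → K →+* ℂ)
    (hσ : ∀ a, ∃ v : InfinitePlace K, ¬ finrank ℚ K ∣ v.mult * Fintype.card (κ a)) :
    ∃ u : (𝓞 K)ˣ, ∀ a, ‖∏ i, σ a i (u : K)‖ ≠ 1 := by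
  have hnontrivial (a) : normProdHom (σ a) ≠ 1 := fun htrivial ↦ by
    obtain ⟨v, hv⟩ := hσ a
    have hnorm (u : (𝓞 K)ˣ) : ‖∏ i, σ a i (u : K)‖ = 1 :=
      normProdHom_eq_one_iff.1 (DFunLike.congr_fun htrivial u)
    exact hv (Dvd.intro_left _ (mult_mul_card_eq_placeMultiplicity_mul_finrank hnorm v).symm)
  obtain ⟨u, hu⟩ := exists_forall_map_ne_one (fun a ↦ normProdHom (σ a)) hnontrivial
  exact ⟨u, fun a ↦ normProdHom_eq_one_iff.not.1 (hu a)⟩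

end NumberField

theorem exists_cHyperbolic_unit_of_not_totallyImaginary_general
    (K : Type*) [Field K] [NumberField K] (v : InfinitePlace K)
    (c : ℕ) (hcn : v.mult * c < finrank ℚ K) :
    ∃ μ : (𝓞 K)ˣ, IsCHyperbolicUnit K c μ := by
  have hdvd (k : Finset.Icc 1 c) : ¬ finrank ℚ K ∣ v.mult * Fintype.card (Fin k) := by
    obtain ⟨hk, hkc⟩ := Finset.mem_Icc.1 k.2
    rw [Fintype.card_fin]
    exact Nat.not_dvd_of_pos_of_lt (Nat.mul_pos InfinitePlace.mult_pos hk)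
      ((Nat.mul_le_mul_left _ hkc).trans_lt hcn)
  obtain ⟨μ, hμ⟩ := exists_unit_forall_norm_prod_ne_one
    (fun p : Σ k : Finset.Icc 1 c, Fin k → K →+* ℂ ↦ p.2) fun p ↦ ⟨v, hdvd p.1⟩
  exact ⟨μ, fun k hk hkc σs ↦ hμ ⟨⟨k, Finset.mem_Icc.2 ⟨hk, hkc⟩⟩, σs⟩⟩

/-- In a number field of degree `n` which is not totally imaginary, there exists a
`c`-hyperbolic unit for every positive `c ≤ n - 1`. -/
theorem exists_cHyperbolic_unit_of_not_totallyImaginary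
    (K : Type*) [Field K] [NumberField K]
    (hreal : Nonempty (K →+* ℝ))
    (c : ℕ) (hc : 1 ≤ c) (hcn : c ≤ finrank ℚ K - 1) :
    ∃ μ : (𝓞 K)ˣ, IsCHyperbolicUnit K c μ :=
  hreal.elim fun φ ↦ exists_cHyperbolic_unit_of_not_totallyImaginary_general K _ c <| by
    rw [(isReal_mk_ofRealHom_comp φ).mult_eq_one]; omega
end

section
/- Let K be a number field of degree n which is not totally imaginary, and let c be a positive integer with c < n. Then there exists a c-hyperbolic unit μ ∈ U_K and an embedding σ₁ : K → ℝ such that |σ₁(μ)| > 1 while |σᵢ(μ)| < 1 for every other embedding σᵢ : K → ℂ (so σ₁(μ) or its inverse is, up to sign, a Pisot number). -/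
/-!
Up to scaling, the functions `u ↦ log (w u)` on the units, one for each infinite place `w`, satisfy
a single linear relation, the product formula `∑ w, mult w * log (w u) = 0`. If
`|σ₁ u ⋯ σₖ u| = 1` for all units `u`, then the number `a w` of indices `i` with `σᵢ` above `w` is
therefore proportional to `mult w`, that is, `k * mult w = n * a w` for all `w`. At a real place
this says `n ∣ k`, so for `0 < k < n` every such product is a nontrivial homomorphism in `u`.

Let `u` be a unit which is small at all places but one, and let `v` be a unit outside the kernels of
these finitely many homomorphisms; it exists because a group is not a finite union of subgroups of
infinite index. Then `u ^ N * v` has the required properties for all large `N`.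
-/

open NumberField Module

section Avoidance

open Filter

variable {G A B ι κ : Type*}

theorem exists_forall_apply_ne_zero [AddGroup G] [AddMonoid B] [IsAddTorsionFree B] [Finite κ]
    {g : κ → G →+ B} (hg : ∀ j, g j ≠ 0) : ∃ v, ∀ j, g j v ≠ 0 := by
  have := Fintype.ofFinite κ
  by_contra! hcover
  -- B. H. Neumann: one of the kernels covering `G` has finite index.
  obtain ⟨j, -, hj⟩ := AddSubgroup.exists_finiteIndex_of_leftCoset_cover
    (s := Finset.univ) (g := fun _ ↦ 0) (H := fun j ↦ (g j).ker)
    (by simpa [Set.eq_univ_iff_forall] using hcover)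
  refine hg j (AddMonoidHom.ext fun v ↦ ?_)
  obtain ⟨n, hn, -, hmem⟩ := AddSubgroup.exists_nsmul_mem_of_index_ne_zero hj.index_ne_zero v
  have hnv : n • g j v = 0 := by simpa using hmem
  simpa [hn.ne'] using hnv

theorem eventually_nsmul_add_neg [AddCommGroup A] [LinearOrder A] [IsOrderedAddMonoid A]
    [Archimedean A] {x : A} (hx : x < 0) (y : A) : ∀ᶠ N : ℕ in atTop, N • x + y < 0 :=
  ((tendsto_atBot_add_const_right _ y (tendsto_id.atTop_nsmul_neg_const hx)).eventually
    (eventually_le_atBot x)).mono fun _ hN ↦ hN.trans_lt hx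

theorem eventually_nsmul_add_ne_zero [AddGroup B] [IsAddTorsionFree B] (x : B) {y : B}
    (hy : y ≠ 0) : ∀ᶠ N : ℕ in atTop, N • x + y ≠ 0 := by
  rcases eq_or_ne x 0 with rfl | hx
  · simp [hy]
  · have hinj : Function.Injective fun N : ℕ ↦ N • x + y :=
      (add_left_injective y).comp <| injective_nsmul_iff_not_isOfFinAddOrder.mpr <|
        not_isOfFinAddOrder_of_isAddTorsionFree hx
    simpa only [Nat.cofinite_eq_atTop] using
      hinj.tendsto_cofinite.eventually (eventually_cofinite_ne 0)

theorem exists_forall_apply_neg_and_forall_apply_ne_zero [AddGroup G]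
    [AddCommGroup A] [LinearOrder A] [IsOrderedAddMonoid A] [Archimedean A]
    [AddGroup B] [IsAddTorsionFree B] [Finite ι] [Finite κ]
    {f : ι → G →+ A} {g : κ → G →+ B} {u : G} (hf : ∀ i, f i u < 0) (hg : ∀ j, g j ≠ 0) :
    ∃ m, (∀ i, f i m < 0) ∧ ∀ j, g j m ≠ 0 := by
  obtain ⟨v, hv⟩ := exists_forall_apply_ne_zero hg
  have hneg : ∀ᶠ N : ℕ in atTop, ∀ i, f i (N • u + v) < 0 := by
    simpa only [map_add, map_nsmul, eventually_all] using
      fun i ↦ eventually_nsmul_add_neg (hf i) (f i v)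
  have hne : ∀ᶠ N : ℕ in atTop, ∀ j, g j (N • u + v) ≠ 0 := by
    simpa only [map_add, map_nsmul, eventually_all] using
      fun j ↦ eventually_nsmul_add_ne_zero (g j u) (hv j)
  obtain ⟨N, hN⟩ := (hneg.and hne).exists
  exact ⟨N • u + v, hN⟩

end Avoidance

section LogAtPlace

open NumberField.InfinitePlace NumberField.Units

variable {K : Type*} [Field K]

/-- The logarithm of the absolute value at an infinite place, as a homomorphism on the units,
which are written additively. Unlike the components of `NumberField.Units.logEmbedding`, it is
not scaled by the multiplicity of the place. -/
noncomputable def logAtPlace (w : InfinitePlace K) : Additive (𝓞 K)ˣ →+ ℝ where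
  toFun u := Real.log (w ((u.toMul : 𝓞 K) : K))
  map_zero' := by simp
  map_add' u v := by simp [Real.log_mul]

@[simp]
theorem logAtPlace_ofMul (w : InfinitePlace K) (u : (𝓞 K)ˣ) :
    logAtPlace w (Additive.ofMul u) = Real.log (w u) := rfl

theorem logAtPlace_ofMul_neg_iff {w : InfinitePlace K} {u : (𝓞 K)ˣ} :
    logAtPlace w (Additive.ofMul u) < 0 ↔ w u < 1 :=
  Real.log_neg_iff (pos_at_place u w)

theorem sum_logAtPlace_mk_ofMul {ι : Type*} [Fintype ι] (σ : ι → K →+* ℂ) (u : (𝓞 K)ˣ) :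
    (∑ i, logAtPlace (mk (σ i))) (Additive.ofMul u) = Real.log ‖∏ i, σ i u‖ := by
  simp [norm_prod, Real.log_prod]

variable [NumberField K]

theorem exists_eq_mul_mult_of_sum_smul_logAtPlace_eq_zero {a : InfinitePlace K → ℝ}
    (ha : ∑ w, a w • logAtPlace w = 0) : ∃ t : ℝ, ∀ w, a w = t * w.mult := by
  -- Subtract the multiple of the product formula that makes all coefficients nonnegative and
  -- one of them, at `w₀`, zero; then test on a unit that is small at every other place.
  obtain ⟨w₀, hmin⟩ := Finite.exists_min fun w ↦ a w / w.mult
  obtain ⟨u, hu⟩ := dirichletUnitTheorem.exists_unit K w₀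
  let t := a w₀ / w₀.mult
  have hw₀ : a w₀ = t * w₀.mult := (div_mul_cancel₀ _ mult_coe_ne_zero).symm
  have hnonneg (w : InfinitePlace K) : 0 ≤ a w - t * w.mult :=
    sub_nonneg.mpr ((le_div_iff₀ (Nat.cast_pos.mpr mult_pos)).mp (hmin w))
  have hsum : ∑ w, (a w - t * w.mult) * Real.log (w u) = 0 := by
    have hau : ∑ w, a w * Real.log (w u) = 0 := by
      simpa using DFunLike.congr_fun ha (Additive.ofMul u)
    simp only [sub_mul, mul_assoc, Finset.sum_sub_distrib, ← Finset.mul_sum, hau,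
      sum_mult_mul_log, mul_zero, sub_zero]
  have hterm (w : InfinitePlace K) : (a w - t * w.mult) * Real.log (w u) ≤ 0 := by
    rcases eq_or_ne w w₀ with rfl | hw
    · simp [hw₀]
    · exact mul_nonpos_of_nonneg_of_nonpos (hnonneg w) (hu w hw).le
  refine ⟨t, fun w ↦ ?_⟩
  rcases eq_or_ne w w₀ with rfl | hw
  · exact hw₀
  · have hzero := (Finset.sum_eq_zero_iff_of_nonpos fun w _ ↦ hterm w).mp hsum w (Finset.mem_univ w)
    exact sub_eq_zero.mp ((mul_eq_zero.mp hzero).resolve_right (hu w hw).ne)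

theorem finrank_dvd_card_mul_mult_of_sum_logAtPlace_eq_zero {ι : Type*} [Fintype ι]
    {p : ι → InfinitePlace K} (hp : ∑ i, logAtPlace (p i) = 0) (w : InfinitePlace K) :
    finrank ℚ K ∣ Fintype.card ι * w.mult := by
  classical
  let a (w : InfinitePlace K) : ℕ := ({i | p i = w} : Finset ι).card
  have hcard : ∑ w, a w = Fintype.card ι :=
    (Finset.card_eq_sum_card_fiberwise fun i _ ↦ Finset.mem_univ (p i)).symm
  have ha : ∑ w, (a w : ℝ) • logAtPlace w = 0 := by
    rw [← hp, ← Finset.sum_fiberwise Finset.univ p]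
    refine Finset.sum_congr rfl fun w _ ↦ ?_
    rw [Finset.sum_congr rfl fun i hi ↦ congrArg logAtPlace (Finset.mem_filter.mp hi).2,
      Finset.sum_const, Nat.cast_smul_eq_nsmul]
  obtain ⟨t, ht⟩ := exists_eq_mul_mult_of_sum_smul_logAtPlace_eq_zero ha
  have hcard_eq : (Fintype.card ι : ℝ) = t * finrank ℚ K := by
    rw [← hcard, ← sum_mult_eq (K := K)]
    push_cast
    rw [Finset.mul_sum]
    exact Finset.sum_congr rfl fun w _ ↦ ht w
  refine ⟨a w, ?_⟩
  have hmul : (Fintype.card ι * w.mult : ℝ) = finrank ℚ K * a w := by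
    rw [hcard_eq, ht]
    ring
  exact_mod_cast hmul

theorem sum_logAtPlace_ne_zero {ι : Type*} [Fintype ι] [Nonempty ι] (p : ι → InfinitePlace K)
    {w : InfinitePlace K} (hw : Fintype.card ι * w.mult < finrank ℚ K) :
    ∑ i, logAtPlace (p i) ≠ 0 := fun hp ↦
  hw.not_ge <| Nat.le_of_dvd (Nat.mul_pos Fintype.card_pos mult_pos) <|
    finrank_dvd_card_mul_mult_of_sum_logAtPlace_eq_zero hp w

end LogAtPlace

section RealEmbedding

open NumberField.InfinitePlace

variable {K : Type*} [Field K]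

theorem isReal_ofRealHom_comp (σ : K →+* ℝ) :
    ComplexEmbedding.IsReal (Complex.ofRealHom.comp σ) := by
  ext x
  simp

theorem mk_eq_mk_iff_of_isReal {φ ψ : K →+* ℂ} (hφ : ComplexEmbedding.IsReal φ) :
    mk ψ = mk φ ↔ ψ = φ := by
  rw [eq_comm, mk_eq_iff, ComplexEmbedding.isReal_iff.mp hφ, or_self, eq_comm]

end RealEmbedding

section Hyperbolic

open NumberField.InfinitePlace NumberField.Units

variable {K : Type*} [Field K] [NumberField K] {c : ℕ} {u : (𝓞 K)ˣ} {w₁ : InfinitePlace K}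

theorem IsCHyperbolicUnit.apply_ne_one (hu : IsCHyperbolicUnit K c u) (hc : 1 ≤ c)
    (w : InfinitePlace K) : w u ≠ 1 := by
  simpa [norm_embedding_eq] using hu 1 le_rfl hc fun _ ↦ w.embedding

theorem isCHyperbolicUnit_of_sum_logAtPlace_ne_zero
    (hu : ∀ k ∈ Set.Icc 1 c, ∀ σ : Fin k → K →+* ℂ,
      (∑ i, logAtPlace (mk (σ i))) (Additive.ofMul u) ≠ 0) :
    IsCHyperbolicUnit K c u := by
  intro k hk hkc σ hσ
  apply hu k ⟨hk, hkc⟩ σ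
  rw [sum_logAtPlace_mk_ofMul, hσ, Real.log_one]

theorem one_lt_apply_of_forall_ne_apply_lt_one (hne : w₁ u ≠ 1) (hlt : ∀ w ≠ w₁, w u < 1) :
    1 < w₁ u := by
  refine hne.symm.lt_of_le (le_of_not_gt fun hw₁ ↦ ?_)
  have hall (w : InfinitePlace K) : w u < 1 := by
    rcases eq_or_ne w w₁ with rfl | hw
    exacts [hw₁, hlt w hw]
  have hneg : ∑ w : InfinitePlace K, w.mult * Real.log (w u) < 0 :=
    Finset.sum_neg (fun w _ ↦ mul_neg_of_pos_of_neg (by exact_mod_cast mult_pos)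
      (Real.log_neg (pos_at_place u w) (hall w))) Finset.univ_nonempty
  exact hneg.ne (sum_mult_mul_log u)

theorem exists_cHyperbolic_pisot_unit_general (w₀ w₁ : InfinitePlace K) (hc : 1 ≤ c)
    (hcn : c * w₀.mult < finrank ℚ K) :
    ∃ μ : (𝓞 K)ˣ, IsCHyperbolicUnit K c μ ∧ 1 < w₁ μ ∧ ∀ w ≠ w₁, w μ < 1 := by
  obtain ⟨u, hu⟩ := dirichletUnitTheorem.exists_unit K w₁
  have hne (s : Σ k : Set.Icc 1 c, Fin k → K →+* ℂ) : ∑ i, logAtPlace (mk (s.2 i)) ≠ 0 := by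
    obtain ⟨⟨k, hk, hkc⟩, σ⟩ := s
    have : NeZero k := ⟨by omega⟩
    refine sum_logAtPlace_ne_zero _ (w := w₀) (lt_of_le_of_lt ?_ hcn)
    simpa using Nat.mul_le_mul_right w₀.mult hkc
  obtain ⟨m, hm_neg, hm_ne⟩ := exists_forall_apply_neg_and_forall_apply_ne_zero
    (f := fun w : {w // w ≠ w₁} ↦ logAtPlace w.1) (u := Additive.ofMul u)
    (fun w ↦ hu w.1 w.2) hne
  have hhyp : IsCHyperbolicUnit K c m.toMul :=
    isCHyperbolicUnit_of_sum_logAtPlace_ne_zero fun k hk σ ↦ hm_ne ⟨⟨k, hk⟩, σ⟩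
  have hlt : ∀ w ≠ w₁, w (m.toMul : K) < 1 := fun w hw ↦
    logAtPlace_ofMul_neg_iff.mp (hm_neg ⟨w, hw⟩)
  exact ⟨m.toMul, hhyp,
    one_lt_apply_of_forall_ne_apply_lt_one (hhyp.apply_ne_one hc w₁) hlt, hlt⟩

end Hyperbolic

/-- In a number field of degree `n` which is not totally imaginary, for every positive
`c < n` there is a `c`-hyperbolic unit `μ` which, under one fixed real embedding, has
absolute value `> 1`, while all other embeddings take value of absolute value `< 1`. -/
theorem exists_cHyperbolic_pisot_unit
    (K : Type*) [Field K] [NumberField K]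
    (hreal : Nonempty (K →+* ℝ))
    (c : ℕ) (hc : 1 ≤ c) (hcn : c < finrank ℚ K) :
    ∃ (μ : (𝓞 K)ˣ) (σ₁ : K →+* ℝ),
      IsCHyperbolicUnit K c μ ∧
      1 < |σ₁ ((μ : 𝓞 K) : K)| ∧
      ∀ σ : K →+* ℂ, σ ≠ Complex.ofRealHom.comp σ₁ →
        ‖σ ((μ : 𝓞 K) : K)‖ < 1 := by
  obtain ⟨σ₁⟩ := hreal
  have hσ₁ := isReal_ofRealHom_comp σ₁
  let w₁ := InfinitePlace.mk (Complex.ofRealHom.comp σ₁)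
  have hw₁ : w₁.mult = 1 := InfinitePlace.IsReal.mult_eq_one ⟨_, hσ₁, rfl⟩
  obtain ⟨μ, hμ, hgt, hlt⟩ := exists_cHyperbolic_pisot_unit_general w₁ w₁ hc (by rwa [hw₁, mul_one])
  exact ⟨μ, σ₁, hμ, by simpa [w₁] using hgt,
    fun σ hσ ↦ hlt (InfinitePlace.mk σ) ((mk_eq_mk_iff_of_isReal hσ₁).not.mpr hσ)⟩
end

section
/- Let ℚ ⊆ F be a finite degree field extension (F a subfield of ℂ) and let m be a positive integer. Then there exists a field extension F ⊆ E ⊆ ℂ such that E is Galois over F and [E : F] = m. Moreover, if F ⊆ ℝ, then E can be chosen so that E is not totally imaginary (E admits an embedding into ℝ). -/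
open Module

/-!
For a prime `p ≡ 1 [MOD 2 * m]` such that `ℚ(ζ_p)` meets `F` only in `ℚ`, the extension `F(ζ_p)/F`
is cyclic of degree `p - 1`, a multiple of `2 * m`. Its subextension `E` of degree `m` is fixed by
every automorphism whose square is trivial; when `F ⊆ ℝ`, complex conjugation is such an
automorphism, hence `E ⊆ ℝ`. All but finitely many primes `p ≡ 1 [MOD 2 * m]` will do: the fields
`ℚ(ζ_p)` are pairwise disjoint over `ℚ`, while `F` has only finitely many subfields to intersect
them in.
-/

open IntermediateField Polynomial NumberField.ComplexEmbedding

theorem exists_disjoint_of_finite_Iic {ι α : Type*} [Infinite ι] [SemilatticeInf α] [OrderBot α]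
    {f : ι → α} (hf : Pairwise (Function.onFun Disjoint f)) (a : α) [Finite (Set.Iic a)] :
    ∃ i, Disjoint (f i) a := by
  obtain ⟨i, j, hij, h⟩ := Finite.exists_ne_map_eq_of_infinite
    fun i ↦ (⟨f i ⊓ a, inf_le_right⟩ : Set.Iic a)
  have h : f i ⊓ a = f j ⊓ a := congrArg Subtype.val h
  refine ⟨i, disjoint_iff_inf_le.2 ?_⟩
  exact (le_inf inf_le_left (h.le.trans inf_le_left)).trans (hf hij).le_bot

theorem exists_subgroup_index_eq_forall_pow_eq_one_mem {G : Type*} [Group G] [Finite G]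
    [IsCyclic G] {d m : ℕ} (h : d * m ∣ Nat.card G) :
    ∃ H : Subgroup G, H.index = m ∧ ∀ g : G, g ^ d = 1 → g ∈ H := by
  let _ : CommGroup G := IsCyclic.commGroup
  obtain ⟨k, hk⟩ := h
  have hcard : Nat.card G = m * (d * k) := by rw [hk]; ring
  have hdk : 0 < d * k := Nat.pos_of_mul_pos_left (hcard ▸ Nat.card_pos)
  refine ⟨(powMonoidHom (d * k) : G →* G).ker, ?_, fun g hg ↦ ?_⟩
  · rw [IsCyclic.index_powMonoidHom_ker, hcard, Nat.gcd_mul_left_left,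
      Nat.mul_div_cancel _ hdk]
  · rw [MonoidHom.mem_ker, powMonoidHom_apply, pow_mul, hg, one_pow]

section Fields

variable {K L : Type*} [Field K] [Field L] [Algebra K L]

theorem exists_isGalois_finrank_eq_of_isCyclic (M : IntermediateField K L) [FiniteDimensional K M]
    [IsGalois K M] [IsCyclic Gal(M/K)] {d m : ℕ} (h : d * m ∣ finrank K M) :
    ∃ E : IntermediateField K L, IsGalois K E ∧ finrank K E = m ∧
      ∀ σ : Gal(L/K), σ ^ d = 1 → σ ∈ E.fixingSubgroup := by
  have : IsAbelianGalois K M := .of_isCyclic K M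
  obtain ⟨H, hindex, hmem⟩ := exists_subgroup_index_eq_forall_pow_eq_one_mem
    ((IsGalois.card_aut_eq_finrank K M).symm ▸ h)
  let e := liftAlgEquiv (fixedField H)
  refine ⟨lift (fixedField H), .of_algEquiv e, ?_, fun σ hσ ↦ ?_⟩
  · rw [← e.toLinearEquiv.finrank_eq, finrank_eq_fixingSubgroup_index, fixingSubgroup_fixedField,
      hindex]
  · have hσH : AlgEquiv.restrictNormalHom M σ ∈ H :=
      hmem _ (by rw [← map_pow, hσ, map_one])
    rw [IntermediateField.mem_fixingSubgroup_iff]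
    intro x hx
    lift x to M using lift_le _ hx
    have hfix : σ.restrictNormal M x = x := (mem_fixedField_iff _ _).1 ((mem_lift x).1 hx) _ hσH
    simpa only [hfix] using! (σ.restrictNormal_commutes M x).symm

theorem isCyclic_gal_of_isCyclotomicExtension (n : ℕ) [NeZero n] [IsCyclic (ZMod n)ˣ]
    [IsCyclotomicExtension {n} K L] : IsCyclic Gal(L/K) :=
  isCyclic_of_injective _ <|
    (IsCyclotomicExtension.zeta_spec n K L).autToPow_injective (K := K)

theorem linearDisjoint_of_isCyclotomicExtension {m n : ℕ} [NeZero m] [NeZero n]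
    (A B : IntermediateField K L) [IsCyclotomicExtension {m} K A] [IsCyclotomicExtension {n} K B]
    (hmn : m.Coprime n) (hm : Irreducible (cyclotomic m K)) (hn : Irreducible (cyclotomic n K))
    (h : Irreducible (cyclotomic (m * n) K)) : A.LinearDisjoint B := by
  have : FiniteDimensional K A := IsCyclotomicExtension.finite_of_singleton m K A
  have : FiniteDimensional K B := IsCyclotomicExtension.finite_of_singleton n K B
  have : IsCyclotomicExtension {m * n} K ↥(A ⊔ B) :=
    hmn.lcm_eq_mul ▸ isCyclotomicExtension_lcm_sup K L m n A B
  apply LinearDisjoint.of_finrank_sup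
  rw [IsCyclotomicExtension.finrank A hm, IsCyclotomicExtension.finrank B hn,
    IsCyclotomicExtension.finrank ↥(A ⊔ B) h, Nat.totient_mul hmn]

theorem isCyclotomicExtension_adjoin_simple (K : Type*) [Field K] [Algebra K L] {n : ℕ} [NeZero n]
    {ζ : L} (hζ : IsPrimitiveRoot ζ n) : IsCyclotomicExtension {n} K K⟮ζ⟯ :=
  (isCyclotomicExtension_singleton_iff_eq_adjoin n K L _ hζ).2 rfl

theorem finite_Iic_of_finite_intermediateField (F : IntermediateField K L)
    [Finite (IntermediateField K F)] : Finite (Set.Iic F) :=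
  Finite.of_surjective (fun E : IntermediateField K F ↦ ⟨lift E, lift_le E⟩)
    fun E ↦ ⟨restrict E.2, Subtype.ext (lift_restrict E.2)⟩

theorem finrank_adjoin_simple_eq_of_disjoint (F : IntermediateField K L) [FiniteDimensional K F]
    {α : L} [FiniteDimensional K K⟮α⟯] [IsGalois K K⟮α⟯] (h : Disjoint K⟮α⟯ F) :
    finrank F F⟮α⟯ = finrank K K⟮α⟯ := by
  have hdisj : K⟮α⟯.LinearDisjoint F := .of_inf_eq_bot h.eq_bot
  have hadjoin : adjoin F (K⟮α⟯ : Set L) = F⟮α⟯ := adjoin_adjoin_right ..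
  rw [finrank, finrank, ← hdisj.adjoin_rank_eq_rank_left_of_isAlgebraic_left, hadjoin]

theorem exists_prime_modEq_one_disjoint_adjoin
    (hK : ∀ n, 0 < n → Irreducible (cyclotomic n K))
    (hL : ∀ p : ℕ, p.Prime → ∃ ζ : L, IsPrimitiveRoot ζ p)
    (F : IntermediateField K L) [Finite (IntermediateField K F)] {k : ℕ} (hk : k ≠ 0) :
    ∃ p : ℕ, p.Prime ∧ p ≡ 1 [MOD k] ∧ ∃ ζ : L, IsPrimitiveRoot ζ p ∧ Disjoint K⟮ζ⟯ F := by
  let P := {p : ℕ | p.Prime ∧ p ≡ 1 [MOD k]}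
  have : Infinite P := (Nat.infinite_setOfPred_prime_modEq_one hk).to_subtype
  choose ζ hζ using fun p : P ↦ hL p p.2.1
  have hdisj : Pairwise (Function.onFun Disjoint fun p ↦ K⟮ζ p⟯) := by
    intro p q hpq
    have : NeZero (p : ℕ) := ⟨p.2.1.ne_zero⟩
    have : NeZero (q : ℕ) := ⟨q.2.1.ne_zero⟩
    have := isCyclotomicExtension_adjoin_simple K (hζ p)
    have := isCyclotomicExtension_adjoin_simple K (hζ q)
    have hcop := (Nat.coprime_primes p.2.1 q.2.1).2 (Subtype.coe_injective.ne hpq)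
    exact disjoint_iff.2 <| (linearDisjoint_of_isCyclotomicExtension _ _ hcop
      (hK _ p.2.1.pos) (hK _ q.2.1.pos) (hK _ (Nat.mul_pos p.2.1.pos q.2.1.pos))).inf_eq_bot
  have := finite_Iic_of_finite_intermediateField F
  obtain ⟨p, hp⟩ := exists_disjoint_of_finite_Iic hdisj F
  exact ⟨p, p.2.1, p.2.2, ζ p, hζ p, hp⟩

theorem exists_isGalois_finrank_eq_of_irreducible_cyclotomic [CharZero K]
    (hK : ∀ n, 0 < n → Irreducible (cyclotomic n K))
    (hL : ∀ p : ℕ, p.Prime → ∃ ζ : L, IsPrimitiveRoot ζ p)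
    (F : IntermediateField K L) [FiniteDimensional K F] {d m : ℕ} (hd : 0 < d) (hm : 0 < m) :
    ∃ E : IntermediateField F L, IsGalois F E ∧ finrank F E = m ∧
      ∀ σ : Gal(L/F), σ ^ d = 1 → σ ∈ E.fixingSubgroup := by
  have : Finite (IntermediateField K F) :=
    Field.finite_intermediateField_of_exists_primitive_element K F
      (Field.exists_primitive_element K F)
  obtain ⟨p, hp, hmod, ζ, hζ, hdisj⟩ :=
    exists_prime_modEq_one_disjoint_adjoin hK hL F (Nat.mul_pos hd hm).ne'
  have : Fact p.Prime := ⟨hp⟩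
  have := isCyclotomicExtension_adjoin_simple K hζ
  have := isCyclotomicExtension_adjoin_simple F hζ
  have : FiniteDimensional K K⟮ζ⟯ := IsCyclotomicExtension.finite_of_singleton p K _
  have : FiniteDimensional F F⟮ζ⟯ := IsCyclotomicExtension.finite_of_singleton p F _
  have : IsGalois K K⟮ζ⟯ := IsCyclotomicExtension.isGalois {p} K _
  have : IsGalois F F⟮ζ⟯ := IsCyclotomicExtension.isGalois {p} F _
  have : IsCyclic Gal(F⟮ζ⟯/F) := isCyclic_gal_of_isCyclotomicExtension p
  have hdeg : finrank F F⟮ζ⟯ = p - 1 := by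
    rw [finrank_adjoin_simple_eq_of_disjoint F hdisj,
      IsCyclotomicExtension.finrank _ (hK p hp.pos), Nat.totient_prime hp]
  exact exists_isGalois_finrank_eq_of_isCyclic F⟮ζ⟯
    (hdeg ▸ (Nat.modEq_iff_dvd' hp.pos).1 hmod.symm)

end Fields

section Real

variable {F : Type*} [Field F] [Algebra F ℂ]

/-- Complex conjugation as an automorphism of `ℂ` over a real field `F`, the realness of `F` being
expressed as that of its structure map to `ℂ`. -/
noncomputable def conjAlgEquiv (hF : IsReal (algebraMap F ℂ)) : Gal(ℂ/F) :=
  .ofRingEquiv (f := starRingAut) (RingHom.congr_fun hF)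

theorem conjAlgEquiv_sq (hF : IsReal (algebraMap F ℂ)) : conjAlgEquiv hF ^ 2 = 1 := by
  ext z
  exact Complex.conj_conj z

theorem isReal_algebraMap_of_conjAlgEquiv_mem_fixingSubgroup (hF : IsReal (algebraMap F ℂ))
    {E : IntermediateField F ℂ} (hE : conjAlgEquiv hF ∈ E.fixingSubgroup) :
    IsReal (algebraMap E ℂ) :=
  RingHom.ext fun x ↦ (IntermediateField.mem_fixingSubgroup_iff _ _).1 hE x x.2

end Real

theorem exists_galois_extension_of_degree_general {K : Type*} [Field K] [Algebra K ℂ]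
    (hK : ∀ n, 0 < n → Irreducible (cyclotomic n K))
    (F : IntermediateField K ℂ) [FiniteDimensional K F] (m : ℕ) (hm : 0 < m) :
    ∃ E : IntermediateField F ℂ, IsGalois F E ∧ finrank F E = m ∧
      ((∀ x : F, ∃ r : ℝ, (x : ℂ) = (r : ℂ)) → Nonempty (E →+* ℝ)) := by
  have : CharZero K := (algebraMap K ℂ).charZero
  obtain ⟨E, hgal, hdeg, hfix⟩ := exists_isGalois_finrank_eq_of_irreducible_cyclotomic hK
    (fun p hp ↦ ⟨_, Complex.isPrimitiveRoot_exp p hp.ne_zero⟩) F two_pos hm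
  refine ⟨E, hgal, hdeg, fun hF ↦ ?_⟩
  have hreal : IsReal (algebraMap F ℂ) := RingHom.ext fun x ↦ Complex.conj_eq_iff_real.2 (hF x)
  exact ⟨(isReal_algebraMap_of_conjAlgEquiv_mem_fixingSubgroup hreal
    (hfix _ (conjAlgEquiv_sq hreal))).embedding⟩

/-- For every finite extension `F` of `ℚ` (inside `ℂ`) and every positive integer `m`,
there is a Galois extension `E` of `F` of degree `m`; moreover, if `F ⊆ ℝ`, then `E` can
be chosen to be not totally imaginary, i.e. to admit an embedding into `ℝ`. -/
theorem exists_galois_extension_of_degree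
    (F : IntermediateField ℚ ℂ) [FiniteDimensional ℚ F]
    (m : ℕ) (hm : 0 < m) :
    (∃ E : IntermediateField F ℂ, IsGalois F E ∧ finrank F E = m) ∧
    ((∀ x : F, ∃ r : ℝ, (x : ℂ) = (r : ℂ)) →
      ∃ E : IntermediateField F ℂ, IsGalois F E ∧ finrank F E = m ∧
        Nonempty (E →+* ℝ)) := by
  obtain ⟨E, hgal, hdeg, hreal⟩ := exists_galois_extension_of_degree_general
    (fun _ ↦ cyclotomic.irreducible_rat) F m hm
  exact ⟨⟨E, hgal, hdeg⟩, fun hF ↦ ⟨E, hgal, hdeg, hreal hF⟩⟩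
end
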